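/- Let 𝔻 be a finitely generated multiplicative set in ℝ[x₁,…,x_d] and A := 𝔻⁻¹ℝ[x₁,…,x_d]. Let f₁,…,f_k ∈ ℝ[x₁,…,x_d], let T be the preordering of A generated by the images of f₁,…,f_k, and set K(T) := {t ∈ ℝ^d : q(t) ≠ 0 for all q ∈ 𝔻, and f_i(t) ≥ 0 for i = 1,…,k}. Let h₁,…,h_m ∈ A and assume: (i) there is a constant C such that |h_j(t)| ≤ C for all t ∈ K(T) and j = 1,…,m, where h_j(t) denotes the value of h_j at t; (ii) for every λ ∈ ℝ^m of the form λ = (h₁(t),…,h_m(t)) with t ∈ K(T), there exist a finitely generated multiplicative set ℰ_λ in the one-variable polynomial ring ℝ[y], a finite-dimensional commutative unital ℝ-algebra C_λ, and a surjective unital ℝ-algebra homomorphism ρ_λ : (ℰ_λ⁻¹ℝ[y]) ⊗_ℝ C_λ → A/I_λ, where I_λ is the ideal of A generated by h₁−λ₁·1,…,h_m−λ_m·1. Then for every linear functional L on A with L(f) ≥ 0 for all f ∈ T there exists a positive Borel measure μ on ℝ^d such that μ(Z(q)) = 0 for every q ∈ 𝔻 and, for all p ∈ ℝ[x₁,…,x_d]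 and q ∈ 𝔻, the function x ↦ p(x)/q(x) is μ-integrable and L(p/q) = ∫_{ℝ^d} p(x)/q(x) dμ(x). -/

import Mathlib

/-- The preordering of a commutative ring generated by a set `S`:
the smallest subset containing all squares and `S`, closed under addition
and multiplication. -/
inductive IsInPreordering {A : Type*} [CommRing A] (S : Set A) : A → Prop
  | sq (a : A) : IsInPreordering S (a ^ 2)
  | gen {a : A} : a ∈ S → IsInPreordering S a
  | add {a b : A} : IsInPreordering S a → IsInPreordering S b → IsInPreordering S (a + b)
  | mul {a b : A} : IsInPreordering S a → IsInPreordering S b → IsInPreordering S (a * b)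

/-- Evaluation of an element of the localization `𝔻⁻¹ℝ[x₁,…,x_d]` at a point `t`
at which no element of `𝔻` vanishes. -/
noncomputable def evalLoc {d : ℕ} (𝔻 : Submonoid (MvPolynomial (Fin d) ℝ)) (t : Fin d → ℝ)
    (ht : ∀ q ∈ 𝔻, MvPolynomial.eval t q ≠ 0) : Localization 𝔻 →+* ℝ :=
  IsLocalization.lift (M := 𝔻) (S := Localization 𝔻)
    (g := (MvPolynomial.eval t : MvPolynomial (Fin d) ℝ →+* ℝ))
    (fun y => isUnit_iff_ne_zero.2 (ht y y.2))

/-- A finite-dimensional commutative unital real algebra. -/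
structure FinCommAlg where
  carrier : Type
  [isRing : CommRing carrier]
  [isAlgebra : Algebra ℝ carrier]
  findim : FiniteDimensional ℝ carrier

attribute [instance] FinCommAlg.isRing FinCommAlg.isAlgebra

/-!
By a theorem of Haviland type, `L` is integration against a measure on the open set where no
denominator vanishes as soon as it is nonnegative on the elements of `A` that are nonnegative there.
By the Krein–Milman theorem it suffices to check this nonnegativity for those functionals on which
every bounded element acts as a scalar. The Positivstellensatz turns the bounds on `h₁,…,h_m` over
`K(T)` into algebraic certificates, so each `h_j` acts on such a functional as a scalar `λ_j`, and
`λ = h(t)` for some `t ∈ K(T)`, as otherwise `-1` would be a sum of an element of `T` and an element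
annihilated by `L`. Such a functional hence factors through `A / I_λ`, where nilpotent and algebraic
elements also act as scalars; what remains is a localization of `ℝ[y]`, in which nonnegative
elements are sums of squares.

The Positivstellensatz comes from an ordering of `A` modulo a real prime: a real closed extension of
its residue field is compared with `ℝ` through sign tables of finite families of polynomials, which
moves a point from that extension to `ℝ`.
-/

open Polynomial Filter Topology

/-! ### Ordered fields with the intermediate value property for polynomials -/

/-- The intermediate value property of a polynomial over an ordered field: it has a root wherever it
changes sign. -/
def HasIVT {K : Type*} [Field K] [LinearOrder K] (p : K[X]) : Prop :=
  ∀ a b : K, a < b → p.eval a * p.eval b < 0 → ∃ c ∈ Set.Ioo a b, p.eval c = 0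

/-- The intermediate value property for all polynomials over an ordered field, which characterizes
the real closed fields. -/
def PolynomialIVT (K : Type*) [Field K] [LinearOrder K] : Prop :=
  ∀ p : K[X], HasIVT p

theorem exists_pow_X_sub_C_mul_eval_ne_zero {R : Type*} [CommRing R] {p : R[X]}
    (hp : p ≠ 0) {a : R} (ha : p.eval a = 0) :
    ∃ (m : ℕ) (q : R[X]), p = (X - C a) ^ (m + 1) * q ∧ q.eval a ≠ 0 := by
  obtain ⟨q, hpq, hdvd⟩ := exists_eq_pow_rootMultiplicity_mul_and_not_dvd p hp a
  obtain ⟨m, hm⟩ := Nat.exists_eq_succ_of_ne_zero ((rootMultiplicity_pos hp).2 ha).ne'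
  rw [hm] at hpq
  exact ⟨m, q, hpq, fun h => hdvd (dvd_iff_isRoot.2 h)⟩

section OrderedField

variable {K : Type*} [Field K] [LinearOrder K] [IsStrictOrderedRing K]

theorem mul_pos_of_sign_eq {x y : K} (hx : x ≠ 0) (h : SignType.sign x = SignType.sign y) :
    0 < x * y := by
  rw [← sign_eq_one_iff, sign_mul, ← h, ← sign_mul, sign_eq_one_iff]
  exact mul_self_pos.2 hx

theorem mul_neg_of_sign_ne {x y : K} (hx : x ≠ 0) (hy : y ≠ 0)
    (h : SignType.sign x ≠ SignType.sign y) : x * y < 0 := by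
  rcases lt_or_gt_of_ne hx with hx | hx <;> rcases lt_or_gt_of_ne hy with hy | hy
  · simp [sign_neg hx, sign_neg hy] at h
  · exact mul_neg_of_neg_of_pos hx hy
  · exact mul_neg_of_pos_of_neg hx hy
  · simp [sign_pos hx, sign_pos hy] at h

namespace PolynomialIVT

variable (hK : PolynomialIVT K)
include hK

theorem sign_eval_eq {p : K[X]} {a b : K} (hab : a ≤ b)
    (h : ∀ c ∈ Set.Icc a b, p.eval c ≠ 0) :
    SignType.sign (p.eval a) = SignType.sign (p.eval b) := by
  rcases hab.eq_or_lt with rfl | hab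
  · rfl
  by_contra hne
  obtain ⟨c, hc, hpc⟩ := hK p a b hab
    (mul_neg_of_sign_ne (h a (Set.left_mem_Icc.2 hab.le)) (h b (Set.right_mem_Icc.2 hab.le)) hne)
  exact h c (Set.Ioo_subset_Icc_self hc) hpc

theorem sign_eval_eq_of_forall_cmp_eq {p : K[X]} {a b : K}
    (h : ∀ c, p.eval c = 0 → cmp c a = cmp c b) :
    SignType.sign (p.eval a) = SignType.sign (p.eval b) := by
  wlog hab : a ≤ b generalizing a b
  · exact (this (fun c hc => (h c hc).symm) (le_of_not_ge hab)).symm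
  by_cases hroot : ∃ c ∈ Set.Icc a b, p.eval c = 0
  · obtain ⟨c, ⟨hac, hcb⟩, hc⟩ := hroot
    have hba : b ≤ a :=
      (le_iff_le_of_cmp_eq_cmp (cmp_eq_cmp_symm.1 (h c hc))).1 hac |>.trans
        ((le_iff_le_of_cmp_eq_cmp (h c hc)).2 hcb)
    rw [le_antisymm hab hba]
  · push Not at hroot
    exact hK.sign_eval_eq hab hroot

theorem exists_derivative_eval_eq_zero_of_consecutive {p : K[X]} (hp : p ≠ 0) {a b : K}
    (hab : a < b) (ha : p.eval a = 0) (hb : p.eval b = 0)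
    (hno : ∀ c ∈ Set.Ioo a b, p.eval c ≠ 0) :
    ∃ c ∈ Set.Ioo a b, (derivative p).eval c = 0 := by
  obtain ⟨m, q, hpq, hqa⟩ := exists_pow_X_sub_C_mul_eval_ne_zero hp ha
  have hqb : q.eval b = 0 := by
    simpa [hpq, (sub_pos.2 hab).ne'] using hb
  have hq : q ≠ 0 := by rintro rfl; simp at hqa
  obtain ⟨n, r, hqr, hrb⟩ := exists_pow_X_sub_C_mul_eval_ne_zero hq hqb
  have hra : r.eval a ≠ 0 := fun h => hqa (by simp [hqr, h])
  have hr : 0 < r.eval a * r.eval b := by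
    refine mul_pos_of_sign_eq hra (hK.sign_eval_eq hab.le fun c hc hrc => ?_)
    rcases hc.1.eq_or_lt with rfl | hac
    · exact hra hrc
    rcases hc.2.eq_or_lt with rfl | hcb
    · exact hrb hrc
    · exact hno c ⟨hac, hcb⟩ (by simp [hpq, hqr, hrc])
  -- `p = (X - a)ᵐ⁺¹ (X - b)ⁿ⁺¹ r`, so `p' = (X - a)ᵐ (X - b)ⁿ g`, and `g` changes sign.
  set g : K[X] := ((m : K[X]) + 1) * (X - C b) * r + ((n : K[X]) + 1) * (X - C a) * r
    + (X - C a) * (X - C b) * derivative r with hg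
  have hderiv : derivative p = (X - C a) ^ m * (X - C b) ^ n * g := by
    rw [hpq, hqr, hg]
    simp only [derivative_mul, derivative_pow, derivative_sub, derivative_X, derivative_C]
    push_cast
    simp only [map_natCast, map_add, map_one]
    ring
  have hgab : g.eval a * g.eval b < 0 := by
    have hpos : 0 < ((m : K) + 1) * (n + 1) * (b - a) ^ 2 * (r.eval a * r.eval b) := by
      have := sub_pos.2 hab
      positivity
    have heq : g.eval a * g.eval b =
        -(((m : K) + 1) * (n + 1) * (b - a) ^ 2 * (r.eval a * r.eval b)) := by
      simp only [hg, eval_add, eval_mul, eval_sub, eval_X, eval_C, eval_natCast, eval_one]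
      ring
    rwa [heq, neg_lt_zero]
  obtain ⟨c, hc, hgc⟩ := hK g a b hab hgab
  exact ⟨c, hc, by simp [hderiv, hgc]⟩

theorem exists_derivative_eval_eq_zero {p : K[X]} (hp : p ≠ 0) {a b : K} (hab : a < b)
    (ha : p.eval a = 0) (hb : p.eval b = 0) :
    ∃ c ∈ Set.Ioo a b, (derivative p).eval c = 0 := by
  classical
  obtain ⟨b', hb', hmin⟩ := (p.roots.toFinset.filter (a < ·)).exists_min_image id
    ⟨b, by simp [hp, hb, hab]⟩
  simp only [Finset.mem_filter, Multiset.mem_toFinset, mem_roots hp, IsRoot.def, id_eq, and_imp]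
    at hb' hmin
  obtain ⟨c, hc, hpc⟩ := hK.exists_derivative_eval_eq_zero_of_consecutive hp hb'.2 ha hb'.1
    fun c hc hpc => hc.2.not_ge (hmin c hpc hc.1)
  exact ⟨c, ⟨hc.1, hc.2.trans_le (hmin b hb hab)⟩, hpc⟩

theorem eval_mul_eval_neg {p : K[X]} {a b c : K} (hc : c ∈ Set.Ioo a b)
    (hd : ∀ x ∈ Set.Ioo a b, (derivative p).eval x ≠ 0) (hpc : p.eval c = 0) :
    p.eval a * p.eval b < 0 := by
  have hp : p ≠ 0 := by rintro rfl; exact hd c hc (by simp)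
  obtain ⟨q, hpq⟩ := dvd_iff_isRoot.2 hpc
  have hqc : q.eval c ≠ 0 := by simpa [hpq] using hd c hc
  have hq : ∀ x ∈ Set.Icc a b, q.eval x ≠ 0 := by
    intro x hx hqx
    have hpx : p.eval x = 0 := by simp [hpq, hqx]
    rcases lt_trichotomy x c with h | rfl | h
    · obtain ⟨y, hy, hpy⟩ := hK.exists_derivative_eval_eq_zero hp h hpx hpc
      exact hd y ⟨hx.1.trans_lt hy.1, hy.2.trans hc.2⟩ hpy
    · exact hqc hqx
    · obtain ⟨y, hy, hpy⟩ := hK.exists_derivative_eval_eq_zero hp h hpc hpx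
      exact hd y ⟨hc.1.trans hy.1, hy.2.trans_le hx.2⟩ hpy
  have hab : a ≤ b := (hc.1.trans hc.2).le
  have hqab := mul_pos_of_sign_eq (hq a (Set.left_mem_Icc.2 hab)) (hK.sign_eval_eq hab hq)
  have hcab : (a - c) * (b - c) < 0 :=
    mul_neg_of_neg_of_pos (sub_neg.2 hc.1) (sub_pos.2 hc.2)
  calc p.eval a * p.eval b = (a - c) * (b - c) * (q.eval a * q.eval b) := by
        simp only [hpq, eval_mul, eval_sub, eval_X, eval_C]; ring
    _ < 0 := mul_neg_of_neg_of_pos hcab hqab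

theorem sign_eval_of_mem_Ioo {p : K[X]} {a b x : K}
    (hd : ∀ c ∈ Set.Ioo a b, (derivative p).eval c ≠ 0) (hs : 0 ≤ p.eval a * p.eval b)
    (hx : x ∈ Set.Ioo a b) :
    SignType.sign (p.eval x) =
      if p.eval a = 0 then SignType.sign (p.eval b) else SignType.sign (p.eval a) := by
  have hp : p ≠ 0 := by rintro rfl; exact hd x hx (by simp)
  have hroot : ∀ c ∈ Set.Ioo a b, p.eval c ≠ 0 := fun c hc hpc =>
    (hK.eval_mul_eval_neg hc hd hpc).not_ge hs
  split_ifs with ha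
  · refine hK.sign_eval_eq hx.2.le fun c hc hpc => ?_
    rcases hc.2.eq_or_lt with rfl | hcb
    · obtain ⟨y, hy, hpy⟩ := hK.exists_derivative_eval_eq_zero hp (hx.1.trans hx.2) ha hpc
      exact hd y hy hpy
    · exact hroot c ⟨hx.1.trans_le hc.1, hcb⟩ hpc
  · refine (hK.sign_eval_eq hx.1.le fun c hc hpc => ?_).symm
    rcases hc.1.eq_or_lt with rfl | hac
    · exact ha hpc
    · exact hroot c ⟨hac, hc.2.trans_lt hx.2⟩ hpc

end PolynomialIVT

theorem exists_forall_ge_le_eval {p : K[X]} (hp : 0 < p.leadingCoeff) :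
    ∃ c > 0, ∀ᶠ x in atTop, c ≤ p.eval x := by
  induction hn : p.natDegree generalizing p with
  | zero =>
    obtain ⟨a, rfl⟩ := natDegree_eq_zero.1 hn
    exact ⟨a, by simpa using hp, by simp⟩
  | succ n ih =>
    have hdeg : p.divX.natDegree = n := by
      rw [natDegree_divX_eq_natDegree_tsub_one, hn, Nat.add_sub_cancel]
    have hlead : p.divX.leadingCoeff = p.leadingCoeff := by
      rw [leadingCoeff, leadingCoeff, coeff_divX, hdeg, hn]
    obtain ⟨c, hc, hev⟩ := ih (hlead ▸ hp) hdeg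
    refine ⟨c, hc, ?_⟩
    filter_upwards [hev, eventually_ge_atTop (1 + |p.coeff 0| / c), eventually_ge_atTop 0]
      with x hx hxc hx0
    have heval : p.eval x = p.divX.eval x * x + p.coeff 0 := by
      conv_lhs => rw [← divX_mul_X_add p]
      simp
    calc c = c * (1 + |p.coeff 0| / c) - |p.coeff 0| := by field_simp; ring
      _ ≤ c * x + p.coeff 0 := by
        have := mul_le_mul_of_nonneg_left hxc hc.le
        linarith [neg_abs_le (p.coeff 0)]
      _ ≤ p.eval x := by rw [heval]; gcongr

theorem eventually_sign_eval_atTop (p : K[X]) :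
    ∀ᶠ x in atTop, SignType.sign (p.eval x) = SignType.sign p.leadingCoeff := by
  rcases lt_trichotomy p.leadingCoeff 0 with h | h | h
  · obtain ⟨c, hc, hev⟩ := exists_forall_ge_le_eval (p := -p) (by simpa using h)
    filter_upwards [hev] with x hx
    rw [sign_neg h, sign_neg (by simp only [eval_neg] at hx; linarith)]
  · simp [leadingCoeff_eq_zero.1 h]
  · obtain ⟨c, hc, hev⟩ := exists_forall_ge_le_eval h
    filter_upwards [hev] with x hx
    rw [sign_pos h, sign_pos (hc.trans_le hx)]

theorem eventually_sign_eval_atBot (p : K[X]) :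
    ∀ᶠ x in atBot, SignType.sign (p.eval x) =
      SignType.sign ((-1) ^ p.natDegree * p.leadingCoeff) := by
  filter_upwards [tendsto_neg_atBot_atTop.eventually (eventually_sign_eval_atTop (p.comp (-X)))]
    with x hx
  simpa [leadingCoeff_comp, mul_comm] using hx

end OrderedField

/-! ### Sign tables in two ordered fields -/

section Cells

open Order

variable {α β : Type*} [LinearOrder α] [LinearOrder β]

/-- A finite partial order isomorphism `Z` cuts both orders into corresponding cells, namely the
points of `Z` and the open intervals between them; `SameCell Z x y` says that `x` and `y` lie in
corresponding cells. -/
def SameCell (Z : PartialIso α β) (x : α) (y : β) : Prop :=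
  ∀ z ∈ Z.val, cmp z.1 x = cmp z.2 y

namespace SameCell

variable {Z Z' : PartialIso α β} {x : α} {y : β}

theorem mono (h : Z ≤ Z') (hxy : SameCell Z' x y) : SameCell Z x y := fun z hz => hxy z (h hz)

theorem eq_iff (h : SameCell Z x y) {z : α × β} (hz : z ∈ Z.val) : z.1 = x ↔ z.2 = y :=
  eq_iff_eq_of_cmp_eq_cmp (h z hz)

theorem lt_iff (h : SameCell Z x y) {z : α × β} (hz : z ∈ Z.val) : z.1 < x ↔ z.2 < y :=
  lt_iff_lt_of_cmp_eq_cmp (h z hz)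

theorem gt_iff (h : SameCell Z x y) {z : α × β} (hz : z ∈ Z.val) : x < z.1 ↔ y < z.2 :=
  lt_iff_lt_of_cmp_eq_cmp (cmp_eq_cmp_symm.1 (h z hz))

theorem of_mem {z : α × β} (hz : z ∈ Z.val) : SameCell Z z.1 z.2 :=
  fun w hw => Z.prop w hw z hz

theorem symm (h : SameCell Z x y) : SameCell Z.comm y x := by
  intro z hz
  obtain ⟨w, hw, rfl⟩ := Finset.mem_image.1 hz
  exact (h w hw).symm

theorem of_comm (h : SameCell Z.comm y x) : SameCell Z x y :=
  fun z hz => (h z.swap (Finset.mem_image_of_mem _ hz)).symm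

end SameCell

theorem exists_sameCell [DenselyOrdered β] [NoMinOrder β] [NoMaxOrder β] [Nonempty β]
    (Z : PartialIso α β) (x : α) : ∃ y, SameCell Z x y :=
  Z.exists_across x

/-- Adjoining to a finite partial order isomorphism finitely many pairs of points in corresponding
cells. -/
def adjoinPairs (Z : PartialIso α β) (N : Finset (α × β))
    (hZN : ∀ z ∈ N, SameCell Z z.1 z.2) (hN : ∀ z ∈ N, ∀ w ∈ N, cmp z.1 w.1 = cmp z.2 w.2) :
    PartialIso α β :=
  ⟨Z.val ∪ N, fun z hz w hw => by
    rcases Finset.mem_union.1 hz with hz | hz <;> rcases Finset.mem_union.1 hw with hw | hw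
    · exact Z.prop z hz w hw
    · exact hZN w hw z hz
    · exact cmp_eq_cmp_symm.1 (hZN z hz w hw)
    · exact hN z hz w hw⟩

theorem le_adjoinPairs {Z : PartialIso α β} {N : Finset (α × β)}
    (hZN : ∀ z ∈ N, SameCell Z z.1 z.2) (hN : ∀ z ∈ N, ∀ w ∈ N, cmp z.1 w.1 = cmp z.2 w.2) :
    Z ≤ adjoinPairs Z N hZN hN :=
  Finset.subset_union_left

theorem exists_adjacent_pairs (Z : PartialIso α β) {x : α} (hx : ∀ z ∈ Z.val, z.1 ≠ x)
    (hlo : ∃ z ∈ Z.val, z.1 < x) (hup : ∃ z ∈ Z.val, x < z.1) :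
    ∃ a ∈ Z.val, ∃ b ∈ Z.val, a.1 < x ∧ x < b.1 ∧ ∀ z ∈ Z.val, z.1 ≤ a.1 ∨ b.1 ≤ z.1 := by
  obtain ⟨a, ha, hamax⟩ := (Z.val.filter (·.1 < x)).exists_max_image Prod.fst
    (Finset.filter_nonempty_iff.2 hlo)
  obtain ⟨b, hb, hbmin⟩ := (Z.val.filter (x < ·.1)).exists_min_image Prod.fst
    (Finset.filter_nonempty_iff.2 hup)
  simp only [Finset.mem_filter, and_imp] at ha hb hamax hbmin
  refine ⟨a, ha.1, b, hb.1, ha.2, hb.2, fun z hz => ?_⟩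
  exact (lt_or_gt_of_ne (hx z hz)).imp (hamax z hz) (hbmin z hz)

theorem exists_adjoin_top [Nonempty α] [NoMaxOrder α] [Nonempty β] [NoMaxOrder β]
    (Z : PartialIso α β) {s₁ : α → Prop} {s₂ : β → Prop}
    (h₁ : ∀ᶠ x in atTop, s₁ x) (h₂ : ∀ᶠ y in atTop, s₂ y) :
    ∃ Z' ≥ Z, ∃ b ∈ Z'.val, Z'.val = insert b Z.val ∧ (∀ x ≥ b.1, s₁ x) ∧ ∀ y ≥ b.2, s₂ y := by
  have hZ₁ : ∀ᶠ x in atTop, ∀ z ∈ Z.val, z.1 < x :=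
    (Filter.eventually_all_finset _).2 fun z _ => eventually_gt_atTop z.1
  have hZ₂ : ∀ᶠ y in atTop, ∀ z ∈ Z.val, z.2 < y :=
    (Filter.eventually_all_finset _).2 fun z _ => eventually_gt_atTop z.2
  obtain ⟨x, hx⟩ := eventually_atTop.1 (h₁.and hZ₁)
  obtain ⟨y, hy⟩ := eventually_atTop.1 (h₂.and hZ₂)
  have hxy : SameCell Z x y := fun z hz => by
    rw [(cmp_eq_lt_iff _ _).2 ((hx x le_rfl).2 z hz), (cmp_eq_lt_iff _ _).2 ((hy y le_rfl).2 z hz)]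
  refine ⟨adjoinPairs Z {(x, y)} (by simpa using hxy) (by simp), le_adjoinPairs _ _, (x, y), ?_, ?_,
    fun x' hx' => (hx x' hx').1, fun y' hy' => (hy y' hy').1⟩
  · simp [adjoinPairs]
  · ext z; simp [adjoinPairs, or_comm]

theorem exists_adjoin_bot [Nonempty α] [NoMinOrder α] [Nonempty β] [NoMinOrder β]
    (Z : PartialIso α β) {s₁ : α → Prop} {s₂ : β → Prop}
    (h₁ : ∀ᶠ x in atBot, s₁ x) (h₂ : ∀ᶠ y in atBot, s₂ y) :
    ∃ Z' ≥ Z, ∃ a ∈ Z'.val, Z'.val = insert a Z.val ∧ (∀ x ≤ a.1, s₁ x) ∧ ∀ y ≤ a.2, s₂ y := by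
  have hZ₁ : ∀ᶠ x in atBot, ∀ z ∈ Z.val, x < z.1 :=
    (Filter.eventually_all_finset _).2 fun z _ => eventually_lt_atBot z.1
  have hZ₂ : ∀ᶠ y in atBot, ∀ z ∈ Z.val, y < z.2 :=
    (Filter.eventually_all_finset _).2 fun z _ => eventually_lt_atBot z.2
  obtain ⟨x, hx⟩ := eventually_atBot.1 (h₁.and hZ₁)
  obtain ⟨y, hy⟩ := eventually_atBot.1 (h₂.and hZ₂)
  have hxy : SameCell Z x y := fun z hz => by
    rw [(cmp_eq_gt_iff _ _).2 ((hx x le_rfl).2 z hz), (cmp_eq_gt_iff _ _).2 ((hy y le_rfl).2 z hz)]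
  refine ⟨adjoinPairs Z {(x, y)} (by simpa using hxy) (by simp), le_adjoinPairs _ _, (x, y), ?_, ?_,
    fun x' hx' => (hx x' hx').1, fun y' hy' => (hy y' hy').1⟩
  · simp [adjoinPairs]
  · ext z; simp [adjoinPairs, or_comm]

section AdjacentPairs

variable {Z : PartialIso α β} {a b : α × β} (ha : a ∈ Z.val) (hb : b ∈ Z.val)
  (hab : ∀ z ∈ Z.val, z.1 ≤ a.1 ∨ b.1 ≤ z.1)
include ha hb hab

theorem snd_le_or_le_snd_of_adjacent : ∀ z ∈ Z.val, z.2 ≤ a.2 ∨ b.2 ≤ z.2 := fun z hz =>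
  (hab z hz).imp (le_iff_le_of_cmp_eq_cmp (Z.prop z hz a ha)).1
    (le_iff_le_of_cmp_eq_cmp (Z.prop b hb z hz)).1

theorem sameCell_of_mem_Ioo_of_adjacent {x : α} {y : β} (hx : x ∈ Set.Ioo a.1 b.1)
    (hy : y ∈ Set.Ioo a.2 b.2) : SameCell Z x y := by
  intro z hz
  rcases hab z hz with h | h
  · have h' := (le_iff_le_of_cmp_eq_cmp (Z.prop z hz a ha)).1 h
    rw [(cmp_eq_lt_iff _ _).2 (h.trans_lt hx.1), (cmp_eq_lt_iff _ _).2 (h'.trans_lt hy.1)]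
  · have h' := (le_iff_le_of_cmp_eq_cmp (Z.prop b hb z hz)).1 h
    rw [(cmp_eq_gt_iff _ _).2 (hx.2.trans_le h), (cmp_eq_gt_iff _ _).2 (hy.2.trans_le h')]

end AdjacentPairs

end Cells

section SignTable

open Order

variable {K₁ K₂ : Type*} [Field K₁] [LinearOrder K₁] [Field K₂] [LinearOrder K₂]

/-- The polynomials `p₁` and `p₂` have the same signs on corresponding cells. -/
def SignsAgree (Z : PartialIso K₁ K₂) (p₁ : K₁[X]) (p₂ : K₂[X]) : Prop :=
  ∀ x y, SameCell Z x y → SignType.sign (p₁.eval x) = SignType.sign (p₂.eval y)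

variable {F : Type*} [Field F] {ι₁ : F →+* K₁} {ι₂ : F →+* K₂}

/-- The sign tables of the finite set `P` of polynomials, mapped to two ordered fields, are the
same: the roots correspond under a finite partial order isomorphism, and the signs agree on
corresponding cells. -/
def SameSignTable (ι₁ : F →+* K₁) (ι₂ : F →+* K₂) (P : Finset F[X]) : Prop :=
  ∃ Z : PartialIso K₁ K₂, ∀ p ∈ P, SignsAgree Z (p.map ι₁) (p.map ι₂)

theorem SameSignTable.mono {P Q : Finset F[X]} (hQ : SameSignTable ι₁ ι₂ Q) (h : P ⊆ Q) :
    SameSignTable ι₁ ι₂ P :=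
  hQ.imp fun _ hZ p hp => hZ p (h hp)

theorem SameSignTable.insert_of_natDegree_eq_zero [DecidableEq F[X]]
    (hι : ∀ r, SignType.sign (ι₁ r) = SignType.sign (ι₂ r)) {p : F[X]} {Q : Finset F[X]}
    (hQ : SameSignTable ι₁ ι₂ Q) (hp : p.natDegree = 0) : SameSignTable ι₁ ι₂ (insert p Q) := by
  obtain ⟨Z, hZ⟩ := hQ
  obtain ⟨r, rfl⟩ := natDegree_eq_zero.1 hp
  exact ⟨Z, (Finset.forall_mem_insert _ _ _).2 ⟨fun x y _ => by simp [hι], hZ⟩⟩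

namespace SignsAgree

variable {Z Z' : PartialIso K₁ K₂} {p₁ : K₁[X]} {p₂ : K₂[X]}

theorem mono (h : Z ≤ Z') (hp : SignsAgree Z p₁ p₂) : SignsAgree Z' p₁ p₂ :=
  fun x y hxy => hp x y (hxy.mono h)

theorem symm (hp : SignsAgree Z p₁ p₂) : SignsAgree Z.comm p₂ p₁ := by
  intro y x hyx
  exact (hp x y hyx.of_comm).symm

theorem eval_eq_zero_iff (hp : SignsAgree Z p₁ p₂) {x : K₁} {y : K₂} (hxy : SameCell Z x y) :
    p₁.eval x = 0 ↔ p₂.eval y = 0 := by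
  rw [← sign_eq_zero_iff, hp x y hxy, sign_eq_zero_iff]

variable [IsStrictOrderedRing K₁] [IsStrictOrderedRing K₂]

theorem exists_mem_of_eval_left_eq_zero (hp : SignsAgree Z p₁ p₂) (hp₁ : p₁ ≠ 0) {x : K₁}
    (hx : p₁.eval x = 0) : ∃ z ∈ Z.val, z.1 = x := by
  classical
  by_contra! hxZ
  obtain ⟨y, hxy⟩ := exists_sameCell Z x
  let S := (Z.val.image Prod.fst ∪ p₁.roots.toFinset).filter (x < ·)
  obtain ⟨x', hxx', hx'⟩ := exists_between_finsets {x} S (by simp [S])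
  simp only [Finset.mem_singleton, forall_eq] at hxx'
  have hx'S : ∀ s ∈ Z.val.image Prod.fst ∪ p₁.roots.toFinset, x < s → x' < s :=
    fun s hs hxs => hx' s (Finset.mem_filter.2 ⟨hs, hxs⟩)
  have hx'y : SameCell Z x' y := by
    intro z hz
    rw [← hxy z hz]
    rcases lt_or_gt_of_ne (hxZ z hz) with h | h
    · rw [(cmp_eq_lt_iff _ _).2 h, (cmp_eq_lt_iff _ _).2 (h.trans hxx')]
    · have := hx'S z.1 (Finset.mem_union_left _ (Finset.mem_image_of_mem _ hz)) h
      rw [(cmp_eq_gt_iff _ _).2 h, (cmp_eq_gt_iff _ _).2 this]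
  have hpx' : p₁.eval x' = 0 := (hp.eval_eq_zero_iff hx'y).2 ((hp.eval_eq_zero_iff hxy).1 hx)
  exact (hx'S x' (Finset.mem_union_right _ (by simp [hp₁, hpx'])) hxx').false

theorem exists_mem_of_eval_right_eq_zero (hp : SignsAgree Z p₁ p₂) (hp₂ : p₂ ≠ 0) {y : K₂}
    (hy : p₂.eval y = 0) : ∃ z ∈ Z.val, z.2 = y := by
  obtain ⟨z, hz, rfl⟩ := hp.symm.exists_mem_of_eval_left_eq_zero hp₂ hy
  obtain ⟨w, hw, rfl⟩ := Finset.mem_image.1 hz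
  exact ⟨w, hw, rfl⟩

theorem of_forall_mem_of_eval_eq_zero (hK₂ : PolynomialIVT K₂) (hp : SignsAgree Z p₁ p₂)
    (hp₂ : p₂ ≠ 0) (hroots : ∀ z ∈ Z.val, p₁.eval z.1 = 0 → z ∈ Z'.val) :
    SignsAgree Z' p₁ p₂ := by
  intro x y hxy
  obtain ⟨y', hxy'⟩ := exists_sameCell Z x
  rw [hp x y' hxy']
  refine hK₂.sign_eval_eq_of_forall_cmp_eq fun c hc => ?_
  obtain ⟨z, hz, rfl⟩ := hp.exists_mem_of_eval_right_eq_zero hp₂ hc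
  have hz' := hroots z hz ((hp.eval_eq_zero_iff (.of_mem hz)).2 hc)
  rw [← hxy' z hz, hxy z hz']

end SignsAgree

variable [IsStrictOrderedRing K₁] [IsStrictOrderedRing K₂]

theorem sign_eval_eq_sign_eval_of_mem_Ioo (hK₁ : PolynomialIVT K₁) (hK₂ : PolynomialIVT K₂)
    {p₁ : K₁[X]} {p₂ : K₂[X]} {a b x : K₁} {c d y : K₂}
    (hac : SignType.sign (p₁.eval a) = SignType.sign (p₂.eval c))
    (hbd : SignType.sign (p₁.eval b) = SignType.sign (p₂.eval d))
    (hd₁ : ∀ t ∈ Set.Ioo a b, (derivative p₁).eval t ≠ 0)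
    (hd₂ : ∀ t ∈ Set.Ioo c d, (derivative p₂).eval t ≠ 0)
    (hx : x ∈ Set.Ioo a b) (hy : y ∈ Set.Ioo c d)
    (hroots : ∀ r ∈ Set.Ioo a b, ∀ s ∈ Set.Ioo c d, p₁.eval r = 0 → p₂.eval s = 0 →
      cmp r x = cmp s y) :
    SignType.sign (p₁.eval x) = SignType.sign (p₂.eval y) := by
  have hzero : p₁.eval a = 0 ↔ p₂.eval c = 0 := by
    rw [← sign_eq_zero_iff, hac, sign_eq_zero_iff]
  have hneg : p₁.eval a * p₁.eval b < 0 ↔ p₂.eval c * p₂.eval d < 0 := by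
    rw [← sign_eq_neg_one_iff, ← sign_eq_neg_one_iff, sign_mul, sign_mul, hac, hbd]
  by_cases hopp : p₁.eval a * p₁.eval b < 0
  · obtain ⟨r, hr, hpr⟩ := hK₁ p₁ a b (hx.1.trans hx.2) hopp
    obtain ⟨s, hs, hps⟩ := hK₂ p₂ c d (hy.1.trans hy.2) (hneg.1 hopp)
    have hcmp := hroots r hr s hs hpr hps
    have ha : p₁.eval a ≠ 0 := left_ne_zero_of_mul hopp.ne
    rcases lt_trichotomy x r with h | rfl | h
    · have h' : y < s := (lt_iff_lt_of_cmp_eq_cmp (cmp_eq_cmp_symm.1 hcmp)).1 h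
      rw [hK₁.sign_eval_of_mem_Ioo (fun t ht => hd₁ t ⟨ht.1, ht.2.trans hr.2⟩) (by simp [hpr])
          ⟨hx.1, h⟩, if_neg ha,
        hK₂.sign_eval_of_mem_Ioo (fun t ht => hd₂ t ⟨ht.1, ht.2.trans hs.2⟩) (by simp [hps])
          ⟨hy.1, h'⟩, if_neg (mt hzero.2 ha), hac]
    · rw [← (eq_iff_eq_of_cmp_eq_cmp hcmp).1 rfl, hpr, hps, sign_zero, sign_zero]
    · have h' : s < y := (lt_iff_lt_of_cmp_eq_cmp hcmp).1 h
      rw [hK₁.sign_eval_of_mem_Ioo (fun t ht => hd₁ t ⟨hr.1.trans ht.1, ht.2⟩) (by simp [hpr])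
          ⟨h, hx.2⟩, if_pos hpr,
        hK₂.sign_eval_of_mem_Ioo (fun t ht => hd₂ t ⟨hs.1.trans ht.1, ht.2⟩) (by simp [hps])
          ⟨h', hy.2⟩, if_pos hps, hbd]
  · rw [hK₁.sign_eval_of_mem_Ioo hd₁ (not_lt.1 hopp) hx,
      hK₂.sign_eval_of_mem_Ioo hd₂ (not_lt.1 (mt hneg.2 hopp)) hy]
    simp only [hzero, hac, hbd]

theorem exists_adjoin_ends {Z : PartialIso K₁ K₂} {p₁ : K₁[X]} {p₂ : K₂[X]}
    (hlead : SignType.sign p₁.leadingCoeff = SignType.sign p₂.leadingCoeff)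
    (hdeg : p₁.natDegree = p₂.natDegree)
    (hZ : ∀ z ∈ Z.val, SignType.sign (p₁.eval z.1) = SignType.sign (p₂.eval z.2)) :
    ∃ Z' ≥ Z, (∀ z ∈ Z'.val, SignType.sign (p₁.eval z.1) = SignType.sign (p₂.eval z.2)) ∧
      (∃ a ∈ Z'.val, ∀ x ≤ a.1, ∀ y ≤ a.2,
        SignType.sign (p₁.eval x) = SignType.sign (p₂.eval y)) ∧
      ∃ b ∈ Z'.val, ∀ x ≥ b.1, ∀ y ≥ b.2,
        SignType.sign (p₁.eval x) = SignType.sign (p₂.eval y) := by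
  have hlead' : SignType.sign ((-1) ^ p₁.natDegree * p₁.leadingCoeff) =
      SignType.sign ((-1) ^ p₂.natDegree * p₂.leadingCoeff) := by
    simp only [sign_mul, sign_pow, Left.sign_neg, sign_one, hlead, hdeg]
  obtain ⟨Z₁, hZ₁, b, hb, hZ₁b, hb₁, hb₂⟩ :=
    exists_adjoin_top Z (eventually_sign_eval_atTop p₁) (eventually_sign_eval_atTop p₂)
  obtain ⟨Z₂, hZ₂, a, ha, hZ₂a, ha₁, ha₂⟩ :=
    exists_adjoin_bot Z₁ (eventually_sign_eval_atBot p₁) (eventually_sign_eval_atBot p₂)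
  have htop : ∀ x ≥ b.1, ∀ y ≥ b.2, SignType.sign (p₁.eval x) = SignType.sign (p₂.eval y) :=
    fun x hx y hy => by rw [hb₁ x hx, hb₂ y hy, hlead]
  have hbot : ∀ x ≤ a.1, ∀ y ≤ a.2, SignType.sign (p₁.eval x) = SignType.sign (p₂.eval y) :=
    fun x hx y hy => by rw [ha₁ x hx, ha₂ y hy, hlead']
  refine ⟨Z₂, hZ₁.trans hZ₂, fun z hz => ?_, ⟨a, ha, hbot⟩, b, hZ₂ hb, htop⟩
  rw [hZ₂a, hZ₁b, Finset.mem_insert, Finset.mem_insert] at hz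
  rcases hz with rfl | rfl | hz
  · exact hbot _ le_rfl _ le_rfl
  · exact htop _ le_rfl _ le_rfl
  · exact hZ z hz

theorem lt_of_sameCell_of_derivative {β : Type*} [LinearOrder β] {Z : PartialIso K₁ β}
    {p : K₁[X]} (hK₁ : PolynomialIVT K₁)
    (hp : p ≠ 0) (hd : ∀ t, (derivative p).eval t = 0 → ∃ z ∈ Z.val, z.1 = t) {x x' : K₁}
    {y y' : β} (hxy : SameCell Z x y) (hxy' : SameCell Z x' y') (hx : p.eval x = 0)
    (hx' : p.eval x' = 0) (hlt : x < x') : y < y' := by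
  obtain ⟨t, ht, hpt⟩ := hK₁.exists_derivative_eval_eq_zero hp hlt hx hx'
  obtain ⟨z, hz, rfl⟩ := hd t hpt
  exact ((hxy.gt_iff hz).1 ht.1).trans ((hxy'.lt_iff hz).1 ht.2)

theorem exists_adjoin_roots {Z : PartialIso K₁ K₂} {p₁ : K₁[X]} {p₂ : K₂[X]}
    (hK₁ : PolynomialIVT K₁) (hK₂ : PolynomialIVT K₂) (hp₁ : p₁ ≠ 0) (hp₂ : p₂ ≠ 0)
    (hd₁ : ∀ t, (derivative p₁).eval t = 0 → ∃ z ∈ Z.val, z.1 = t)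
    (hd₂ : ∀ t, (derivative p₂).eval t = 0 → ∃ z ∈ Z.val, z.2 = t) :
    ∃ Z' ≥ Z, ∀ x y, p₁.eval x = 0 → p₂.eval y = 0 → SameCell Z x y → (x, y) ∈ Z'.val := by
  classical
  let N : Finset (K₁ × K₂) := (p₁.roots.toFinset ×ˢ p₂.roots.toFinset).filter
    fun z => SameCell Z z.1 z.2
  have hN : ∀ z, z ∈ N ↔ (p₁.eval z.1 = 0 ∧ p₂.eval z.2 = 0) ∧ SameCell Z z.1 z.2 := by
    simp [N, hp₁, hp₂]
  have hd₂' : ∀ t, (derivative p₂).eval t = 0 → ∃ z ∈ Z.comm.val, z.1 = t := fun t ht =>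
    let ⟨z, hz, hzt⟩ := hd₂ t ht
    ⟨z.swap, Finset.mem_image_of_mem _ hz, hzt⟩
  have hmono : ∀ z ∈ N, ∀ w ∈ N, z.1 < w.1 → z.2 < w.2 := fun z hz w hw =>
    have hz := (hN z).1 hz
    have hw := (hN w).1 hw
    lt_of_sameCell_of_derivative hK₁ hp₁ hd₁ hz.2 hw.2 hz.1.1 hw.1.1
  have hmono' : ∀ z ∈ N, ∀ w ∈ N, z.2 < w.2 → z.1 < w.1 := fun z hz w hw =>
    have hz := (hN z).1 hz
    have hw := (hN w).1 hw
    lt_of_sameCell_of_derivative hK₂ hp₂ hd₂' hz.2.symm hw.2.symm hz.1.2 hw.1.2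
  have hcmp : ∀ z ∈ N, ∀ w ∈ N, cmp z.1 w.1 = cmp z.2 w.2 := by
    intro z hz w hw
    have hlt : z.1 < w.1 ↔ z.2 < w.2 := ⟨hmono z hz w hw, hmono' z hz w hw⟩
    have hgt : w.1 < z.1 ↔ w.2 < z.2 := ⟨hmono w hw z hz, hmono' w hw z hz⟩
    simp only [cmp, cmpUsing, hlt, hgt]
  exact ⟨adjoinPairs Z N (fun z hz => ((hN z).1 hz).2) hcmp, le_adjoinPairs _ _,
    fun x y hx hy hxy => Finset.mem_union_right _ ((hN (x, y)).2 ⟨⟨hx, hy⟩, hxy⟩)⟩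

theorem exists_signsAgree_of_derivative {Z : PartialIso K₁ K₂} {p₁ : K₁[X]} {p₂ : K₂[X]}
    (hK₁ : PolynomialIVT K₁) (hK₂ : PolynomialIVT K₂) (hp₁ : p₁ ≠ 0) (hp₂ : p₂ ≠ 0)
    (hlead : SignType.sign p₁.leadingCoeff = SignType.sign p₂.leadingCoeff)
    (hdeg : p₁.natDegree = p₂.natDegree)
    (hd₁ : ∀ t, (derivative p₁).eval t = 0 → ∃ z ∈ Z.val, z.1 = t)
    (hd₂ : ∀ t, (derivative p₂).eval t = 0 → ∃ z ∈ Z.val, z.2 = t)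
    (hZ : ∀ z ∈ Z.val, SignType.sign (p₁.eval z.1) = SignType.sign (p₂.eval z.2)) :
    ∃ Z' ≥ Z, SignsAgree Z' p₁ p₂ := by
  obtain ⟨W, hZW, hW, ⟨l, hl, hlow⟩, u, hu, hup⟩ := exists_adjoin_ends hlead hdeg hZ
  replace hd₁ := fun t ht => (hd₁ t ht).imp fun _ h => h.imp_left fun hz => hZW hz
  replace hd₂ := fun t ht => (hd₂ t ht).imp fun _ h => h.imp_left fun hz => hZW hz
  obtain ⟨Z', hWZ', hroots⟩ := exists_adjoin_roots hK₁ hK₂ hp₁ hp₂ hd₁ hd₂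
  refine ⟨Z', hZW.trans hWZ', fun x y hxy' => ?_⟩
  have hxy := hxy'.mono hWZ'
  by_cases hxW : ∃ z ∈ W.val, z.1 = x
  · obtain ⟨z, hz, rfl⟩ := hxW
    rw [hW z hz, (hxy.eq_iff hz).1 rfl]
  push Not at hxW
  rcases lt_or_gt_of_ne (hxW l hl) with hlx | hxl
  swap
  · exact hlow x hxl.le y ((hxy.gt_iff hl).1 hxl).le
  rcases lt_or_gt_of_ne (hxW u hu) with hux | hxu
  · exact hup x hux.le y ((hxy.lt_iff hu).1 hux).le
  obtain ⟨a, ha, b, hb, hax, hxb, hab⟩ := exists_adjacent_pairs W hxW ⟨l, hl, hlx⟩ ⟨u, hu, hxu⟩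
  refine sign_eval_eq_sign_eval_of_mem_Ioo hK₁ hK₂ (hW a ha) (hW b hb) (fun t ht hdt => ?_)
    (fun t ht hdt => ?_) ⟨hax, hxb⟩ ⟨(hxy.lt_iff ha).1 hax, (hxy.gt_iff hb).1 hxb⟩
    fun r hr s hs hpr hps => ?_
  · obtain ⟨z, hz, rfl⟩ := hd₁ t hdt
    exact (hab z hz).elim ht.1.not_ge ht.2.not_ge
  · obtain ⟨z, hz, rfl⟩ := hd₂ t hdt
    exact (snd_le_or_le_snd_of_adjacent ha hb hab z hz).elim ht.1.not_ge ht.2.not_ge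
  · exact hxy' _ (hroots r s hpr hps (sameCell_of_mem_Ioo_of_adjacent ha hb hab hr hs))

theorem eval_map_mod_eq {R : Type*} [CommRing R] {ι : F →+* R} {p q : F[X]} {x : R}
    (hx : (q.map ι).eval x = 0) : (p.map ι).eval x = ((p % q).map ι).eval x := by
  conv_lhs => rw [← EuclideanDomain.div_add_mod p q]
  simp [hx]

/-- Only the common roots of `Q` matter for the sign table of `Q`, and at a root of `q` the
polynomials `p` and `p % q` have the same value. -/
theorem exists_signsAgree_and_sign_eval_eq (hK₂ : PolynomialIVT K₂) {Z : PartialIso K₁ K₂}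
    {p : F[X]} {Q : Finset F[X]} (hQ : ∀ q ∈ Q, SignsAgree Z (q.map ι₁) (q.map ι₂))
    (hmod : ∀ q ∈ Q, q ≠ 0 → SignsAgree Z ((p % q).map ι₁) ((p % q).map ι₂)) :
    ∃ Z' : PartialIso K₁ K₂, (∀ q ∈ Q, SignsAgree Z' (q.map ι₁) (q.map ι₂)) ∧
      ∀ z ∈ Z'.val, SignType.sign ((p.map ι₁).eval z.1) = SignType.sign ((p.map ι₂).eval z.2) := by
  classical
  let Z' : PartialIso K₁ K₂ :=
    ⟨Z.val.filter fun z => ∃ q ∈ Q, q ≠ 0 ∧ (q.map ι₁).eval z.1 = 0, fun z hz w hw =>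
      Z.prop z (Finset.mem_of_mem_filter z hz) w (Finset.mem_of_mem_filter w hw)⟩
  refine ⟨Z', fun q hq => ?_, fun z hz => ?_⟩
  · rcases eq_or_ne q 0 with rfl | hq0
    · intro x y _
      simp
    · exact (hQ q hq).of_forall_mem_of_eval_eq_zero hK₂ (map_ne_zero hq0)
        fun z hz hqz => Finset.mem_filter.2 ⟨hz, q, hq, hq0, hqz⟩
  · obtain ⟨hz, q, hq, hq0, hqz⟩ := Finset.mem_filter.1 hz
    have hqz' : (q.map ι₂).eval z.2 = 0 := ((hQ q hq).eval_eq_zero_iff (.of_mem hz)).1 hqz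
    rw [eval_map_mod_eq hqz, eval_map_mod_eq hqz']
    exact hmod q hq hq0 _ _ (.of_mem hz)

theorem SameSignTable.insert_of_derivative_mem [DecidableEq F[X]]
    (hK₁ : PolynomialIVT K₁) (hK₂ : PolynomialIVT K₂)
    (hι : ∀ r, SignType.sign (ι₁ r) = SignType.sign (ι₂ r)) {p : F[X]} {Q : Finset F[X]}
    (hp : derivative p ≠ 0) (hpQ : derivative p ∈ Q)
    (hQ : SameSignTable ι₁ ι₂ (Q ∪ (Q.erase 0).image (p % ·))) :
    SameSignTable ι₁ ι₂ (insert p Q) := by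
  obtain ⟨Z, hZ⟩ := hQ
  obtain ⟨W, hWQ, hW⟩ := exists_signsAgree_and_sign_eval_eq (p := p) hK₂
    (fun q hq => hZ q (Finset.mem_union_left _ hq)) fun q hq hq0 => hZ (p % q)
      (Finset.mem_union_right _ (Finset.mem_image_of_mem _ (Finset.mem_erase.2 ⟨hq0, hq⟩)))
  have hp0 : p ≠ 0 := by rintro rfl; simp at hp
  have hd := hWQ _ hpQ
  obtain ⟨Z', hWZ', hZ'⟩ := exists_signsAgree_of_derivative hK₁ hK₂
    (Polynomial.map_ne_zero hp0 (f := ι₁)) (Polynomial.map_ne_zero hp0 (f := ι₂))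
    (by simp [hι]) (by simp)
    (fun t ht => hd.exists_mem_of_eval_left_eq_zero (Polynomial.map_ne_zero hp)
      (by rwa [derivative_map] at ht))
    (fun t ht => hd.exists_mem_of_eval_right_eq_zero (Polynomial.map_ne_zero hp)
      (by rwa [derivative_map] at ht)) hW
  exact ⟨Z', Finset.forall_mem_insert _ _ _ |>.2 ⟨hZ', fun q hq => (hWQ q hq).mono hWZ'⟩⟩

theorem sameSignTable_of_degree_lt (hK₁ : PolynomialIVT K₁) (hK₂ : PolynomialIVT K₂)
    (hι : ∀ r, SignType.sign (ι₁ r) = SignType.sign (ι₂ r)) (n : ℕ) (P : Finset F[X])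
    (hP : ∀ p ∈ P, p.degree < n) : SameSignTable ι₁ ι₂ P := by
  classical
  have : CharZero F := ι₁.charZero
  induction n generalizing P with
  | zero =>
    refine ⟨⟨∅, by simp⟩, fun p hp x y _ => ?_⟩
    simp [show p = 0 by simpa using hP p hp]
  | succ n ih =>
    suffices h : ∀ L : Finset F[X], (∀ p ∈ L, p.degree < n) → SameSignTable ι₁ ι₂ (P ∪ L) by
      simpa using h ∅ (by simp)
    induction P using Finset.induction_on with
    | empty => simpa using ih
    | insert p P _ ihP =>
      intro L hL
      have hdeg : ∀ q : F[X], q.degree < (n + 1 : ℕ) ↔ q.degree ≤ n := fun q => by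
        simp only [degree_lt_iff_coeff_zero, degree_le_iff_coeff_zero, Nat.cast_lt,
          Nat.succ_le_iff]
      simp only [Finset.forall_mem_insert, hdeg] at hP ihP
      specialize ihP hP.2
      rw [Finset.insert_union]
      rcases eq_or_ne (derivative p) 0 with hd | hd
      · exact (ihP L hL).insert_of_natDegree_eq_zero hι (derivative_eq_zero.1 hd)
      have hp : p ≠ 0 := by rintro rfl; simp at hd
      have hL' : ∀ q ∈ insert (derivative p) L, q.degree < n :=
        (Finset.forall_mem_insert _ _ _).2 ⟨(degree_derivative_lt hp).trans_le hP.1, hL⟩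
      let Q := P ∪ insert (derivative p) L
      have hQ : ∀ q ∈ Q, q.degree ≤ n := fun q hq =>
        (Finset.mem_union.1 hq).elim (hP.2 q) fun hq => (hL' q hq).le
      have hmod : ∀ r ∈ (Q.erase 0).image (p % ·), r.degree < n := by
        simp only [Finset.forall_mem_image, Finset.mem_erase]
        exact fun q hq => (EuclideanDomain.mod_lt p hq.1).trans_le (hQ q hq.2)
      have hsst := ihP (insert (derivative p) L ∪ (Q.erase 0).image (p % ·)) fun r hr =>
        (Finset.mem_union.1 hr).elim (hL' r) (hmod r)
      rw [← Finset.union_assoc] at hsst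
      refine (SameSignTable.insert_of_derivative_mem hK₁ hK₂ hι hd (by simp) hsst).mono ?_
      exact Finset.insert_subset_insert _
        (Finset.union_subset_union_right (Finset.subset_insert _ _))

theorem exists_forall_mem_sign_eval₂_eq (hK₁ : PolynomialIVT K₁) (hK₂ : PolynomialIVT K₂)
    (hι : ∀ r, SignType.sign (ι₁ r) = SignType.sign (ι₂ r)) (P : Finset F[X]) (x : K₁) :
    ∃ y, ∀ p ∈ P, SignType.sign (p.eval₂ ι₁ x) = SignType.sign (p.eval₂ ι₂ y) := by
  obtain ⟨Z, hZ⟩ := sameSignTable_of_degree_lt hK₁ hK₂ hι (P.sup natDegree + 1) P fun p hp =>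
    degree_le_natDegree.trans_lt
      (Nat.cast_lt.2 (Nat.lt_succ_of_le (Finset.le_sup (f := natDegree) hp)))
  obtain ⟨y, hxy⟩ := exists_sameCell Z x
  exact ⟨y, fun p hp => by simpa only [eval_map] using hZ p hp x y hxy⟩

end SignTable

/-! ### Transfer of sign conditions -/

section Germ

variable {α : Type*} {φ : Ultrafilter α} {K : Type*} [Field K]

/-- The composite of `ι` with the diagonal embedding of `K` into its ultrapower along `φ`. -/
def toUltrapower (φ : Ultrafilter α) {F : Type*} [CommRing F] (ι : F →+* K) :
    F →+* Germ (φ : Filter α) K :=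
  (Germ.coeRingHom (φ : Filter α)).comp ((Pi.constRingHom α K).comp ι)

variable {F : Type*} [CommRing F] {ι : F →+* K}

theorem eval₂_toUltrapower (b : α → K) (p : F[X]) :
    p.eval₂ (toUltrapower φ ι) (b : Germ (φ : Filter α) K) =
      ((fun t => p.eval₂ ι (b t) : α → K) : Germ (φ : Filter α) K) := by
  refine (hom_eval₂ p _ (Germ.coeRingHom (φ : Filter α)) b).symm.trans ?_
  rw [Germ.coe_coeRingHom]
  congr 1
  ext t
  exact hom_eval₂ p _ (Pi.evalRingHom (fun _ => K) t) b

variable [LinearOrder K]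

theorem sign_coe_eq_iff {f : α → K} {s : SignType} :
    SignType.sign (f : Germ (φ : Filter α) K) = s ↔ ∀ᶠ t in φ, SignType.sign (f t) = s := by
  cases s
  · simp only [SignType.zero_eq_zero, sign_eq_zero_iff]
    exact Germ.coe_eq
  · simp only [SignType.neg_eq_neg_one, sign_eq_neg_one_iff]
    exact Germ.coe_lt
  · simp only [SignType.pos_eq_one, sign_eq_one_iff]
    exact Germ.coe_pos

theorem PolynomialIVT.germ (hK : PolynomialIVT K) : PolynomialIVT (Germ (φ : Filter α) K) := by
  intro p a b hab hp
  obtain ⟨p, rfl⟩ := map_surjective (Germ.coeRingHom (φ : Filter α))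
    (fun x => x.inductionOn fun f => ⟨f, rfl⟩) p
  let P : α → K[X] := fun t => p.map (Pi.evalRingHom _ t)
  have heval : ∀ x : α → K, (p.map (Germ.coeRingHom (φ : Filter α))).eval (x : Germ _ K) =
      ((fun t => (P t).eval (x t) : α → K) : Germ _ K) := by
    intro x
    rw [← Germ.coe_coeRingHom, eval_map_apply]
    congr 1
    ext t
    exact (eval_map_apply (f := Pi.evalRingHom (fun _ => K) t) (p := p) x).symm
  induction a, b using Germ.inductionOn₂ with | _ a b
  rw [heval, heval] at hp
  have hroot : ∀ᶠ t in φ, ∃ c, a t < c ∧ c < b t ∧ (P t).eval c = 0 := by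
    filter_upwards [Germ.coe_lt.1 hab, Germ.coe_lt.1 hp] with t hab hp
    obtain ⟨c, hc, hpc⟩ := hK (P t) (a t) (b t) hab hp
    exact ⟨c, hc.1, hc.2, hpc⟩
  obtain ⟨c, hc⟩ := hroot.choice
  refine ⟨c, ⟨Germ.coe_lt.2 (hc.mono fun _ h => h.1), Germ.coe_lt.2 (hc.mono fun _ h => h.2.1)⟩, ?_⟩
  rw [heval]
  exact Germ.coe_eq.2 (hc.mono fun _ h => h.2.2)

theorem exists_sign_eval₂_eq_toUltrapower {σ : Type*} (b : σ → Germ (φ : Filter α) K)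
    (S : Finset (MvPolynomial σ F)) :
    ∃ b' : σ → K, ∀ f ∈ S,
      SignType.sign (f.eval₂ ι b') = SignType.sign (f.eval₂ (toUltrapower φ ι) b) := by
  choose B hB using fun i => (b i).inductionOn (p := fun x => ∃ f : α → K, (f : Germ _ K) = x)
    fun f => ⟨f, rfl⟩
  have heval : ∀ f : MvPolynomial σ F, f.eval₂ (toUltrapower φ ι) b =
      ((fun t => f.eval₂ ι (B · t) : α → K) : Germ (φ : Filter α) K) := by
    intro f
    rw [← funext hB]
    refine (MvPolynomial.eval₂_comp_left (Germ.coeRingHom (φ : Filter α)) _ B f).symm.trans ?_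
    rw [Germ.coe_coeRingHom]
    congr 1
    ext t
    exact MvPolynomial.eval₂_comp_left (Pi.evalRingHom (fun _ => K) t) _ B f
  have hev : ∀ᶠ t in φ, ∀ f ∈ S, SignType.sign (f.eval₂ ι (B · t)) =
      SignType.sign (f.eval₂ (toUltrapower φ ι) b) :=
    (Filter.eventually_all_finset _).2 fun f _ => sign_coe_eq_iff.1 (by rw [heval])
  obtain ⟨t, ht⟩ := hev.exists
  exact ⟨(B · t), ht⟩

end Germ

universe u v

section Transfer

theorem sign_div_eq_mul {K : Type*} [Field K] [LinearOrder K] [IsStrictOrderedRing K] (x y : K) :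
    SignType.sign (x / y) = SignType.sign x * SignType.sign y := by
  rcases lt_trichotomy y 0 with h | rfl | h
  · rw [div_eq_mul_inv, sign_mul, sign_neg h, sign_neg (inv_lt_zero.2 h)]
  · simp
  · rw [div_eq_mul_inv, sign_mul, sign_pos h, sign_pos (inv_pos.2 h)]

theorem exists_field_lift_sign_eq {R : Type u} [CommRing R] {K₁ K₂ : Type*}
    [Field K₁] [LinearOrder K₁] [IsStrictOrderedRing K₁]
    [Field K₂] [LinearOrder K₂] [IsStrictOrderedRing K₂] (φ₁ : R →+* K₁) (φ₂ : R →+* K₂)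
    (hφ : ∀ r, SignType.sign (φ₁ r) = SignType.sign (φ₂ r)) :
    ∃ (F : Type u) (_ : Field F) (ρ : R →+* F) (ι₁ : F →+* K₁) (ι₂ : F →+* K₂),
      ι₁.comp ρ = φ₁ ∧ ι₂.comp ρ = φ₂ ∧ ∀ x, SignType.sign (ι₁ x) = SignType.sign (ι₂ x) := by
  have hker : RingHom.ker φ₂ = RingHom.ker φ₁ := by
    ext r
    rw [RingHom.mem_ker, RingHom.mem_ker, ← sign_eq_zero_iff, ← hφ, sign_eq_zero_iff]
  let R' := R ⧸ RingHom.ker φ₁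
  let ψ₁ : R' →+* K₁ := Ideal.Quotient.lift _ φ₁ fun r hr => hr
  let ψ₂ : R' →+* K₂ := Ideal.Quotient.lift _ φ₂ fun r hr => hker.ge hr
  have hψ₁ : Function.Injective ψ₁ := RingHom.lift_injective_of_ker_le_ideal _ _ le_rfl
  have hψ₂ : Function.Injective ψ₂ := RingHom.lift_injective_of_ker_le_ideal _ _ hker.le
  have : (RingHom.ker φ₁).IsPrime := RingHom.ker_isPrime φ₁
  refine ⟨FractionRing R', inferInstance, (algebraMap R' _).comp (Ideal.Quotient.mk _),
    IsFractionRing.lift hψ₁, IsFractionRing.lift hψ₂, ?_, ?_, fun x => ?_⟩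
  · ext r
    exact IsFractionRing.lift_algebraMap hψ₁ _
  · ext r
    exact IsFractionRing.lift_algebraMap hψ₂ _
  have hψ : ∀ r, SignType.sign (ψ₁ r) = SignType.sign (ψ₂ r) :=
    Ideal.Quotient.mk_surjective.forall.2 hφ
  obtain ⟨a, b, -, rfl⟩ := IsFractionRing.div_surjective (A := R') x
  simp only [map_div₀, IsFractionRing.lift_algebraMap, sign_div_eq_mul, hψ]

/-- The image of `f` under the substitution of `ρ X` for the variable of index `0`. -/
noncomputable def substZero {F F' : Type*} [CommRing F] [CommRing F'] (ρ : F[X] →+* F') {n : ℕ} :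
    MvPolynomial (Fin (n + 1)) F →+* MvPolynomial (Fin n) F' :=
  MvPolynomial.eval₂Hom (MvPolynomial.C.comp (ρ.comp C))
    (Fin.cons (MvPolynomial.C (ρ X)) MvPolynomial.X)

theorem eval₂_substZero {F F' K : Type*} [CommRing F] [CommRing F'] [CommRing K]
    {ρ : F[X] →+* F'} {n : ℕ} (ι : F →+* K) (ι' : F' →+* K) {a : Fin (n + 1) → K}
    (h : ι'.comp ρ = eval₂RingHom ι (a 0)) (f : MvPolynomial (Fin (n + 1)) F) :
    (substZero ρ f).eval₂ ι' (Fin.tail a) = f.eval₂ ι a := by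
  have hρ : ∀ p, ι' (ρ p) = p.eval₂ ι (a 0) := fun p => DFunLike.congr_fun h p
  suffices h : (MvPolynomial.eval₂Hom ι' (Fin.tail a)).comp (substZero ρ) =
      MvPolynomial.eval₂Hom ι a from DFunLike.congr_fun h f
  refine MvPolynomial.ringHom_ext (fun r => by simp [substZero, hρ]) fun i => ?_
  cases i using Fin.cases <;> simp [substZero, hρ, Fin.tail]

theorem exists_sign_eval₂_eq {F K₂ : Type u} {K₁ : Type v} [Field F]
    [Field K₁] [LinearOrder K₁] [IsStrictOrderedRing K₁]
    [Field K₂] [LinearOrder K₂] [IsStrictOrderedRing K₂]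
    (hK₁ : PolynomialIVT K₁) (hK₂ : PolynomialIVT K₂) (ι₁ : F →+* K₁) (ι₂ : F →+* K₂)
    (hι : ∀ r, SignType.sign (ι₁ r) = SignType.sign (ι₂ r)) {n : ℕ} (a : Fin n → K₁)
    (S : Finset (MvPolynomial (Fin n) F)) :
    ∃ b : Fin n → K₂, ∀ f ∈ S,
      SignType.sign (f.eval₂ ι₁ a) = SignType.sign (f.eval₂ ι₂ b) := by
  classical
  induction n generalizing F K₂ with
  | zero =>
    refine ⟨0, fun f _ => ?_⟩
    obtain ⟨r, rfl⟩ := MvPolynomial.C_surjective (Fin 0) f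
    simp [hι]
  | succ n ih =>
    choose b hb using fun P => exists_forall_mem_sign_eval₂_eq hK₁ hK₂ hι P (a 0)
    let φ : Ultrafilter (Finset F[X]) := Ultrafilter.of atTop
    let K' := Germ (φ : Filter (Finset F[X])) K₂
    have hsign : ∀ p, SignType.sign (eval₂RingHom ι₁ (a 0) p) =
        SignType.sign (eval₂RingHom (toUltrapower φ ι₂) (b : K') p) := fun p => by
      rw [coe_eval₂RingHom, coe_eval₂RingHom, eval₂_toUltrapower, eq_comm, sign_coe_eq_iff]
      filter_upwards [Ultrafilter.of_le atTop (eventually_ge_atTop {p})] with P hP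
      exact (hb P p (Finset.singleton_subset_iff.1 hP)).symm
    obtain ⟨F', _, ρ, ι₁', ι₂', h₁, h₂, hι'⟩ := exists_field_lift_sign_eq _ _ hsign
    obtain ⟨b', hb'⟩ := ih hK₂.germ ι₁' ι₂' hι' (Fin.tail a) (S.image (substZero ρ))
    let c : Fin (n + 1) → K' := Fin.cons (b : K') b'
    obtain ⟨b'', hb''⟩ := exists_sign_eval₂_eq_toUltrapower (ι := ι₂) c S
    refine ⟨b'', fun f hf => ?_⟩
    rw [hb'' f hf, ← eval₂_substZero ι₁ ι₁' h₁ f, ← eval₂_substZero (a := c) _ ι₂' h₂ f]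
    exact hb' _ (Finset.mem_image_of_mem _ hf)

end Transfer

/-! ### Orderings of rings and fields -/

section Ordering

variable {R : Type*} [CommRing R]

theorem exists_neg_one_eq_add_mul_of_isMax {P : RingPreordering R} (hP : IsMax P) {a : R}
    (ha : a ∉ P) : ∃ p ∈ P, ∃ q ∈ P, -1 = p + a * q := by
  by_contra hneg
  let Q : RingPreordering R := .mk' {x | ∃ p ∈ P, ∃ q ∈ P, x = p + a * q}
    (by
      rintro _ _ ⟨p, hp, q, hq, rfl⟩ ⟨p', hp', q', hq', rfl⟩
      exact ⟨p + p', add_mem hp hp', q + q', add_mem hq hq', by ring⟩)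
    (by
      rintro _ _ ⟨p, hp, q, hq, rfl⟩ ⟨p', hp', q', hq', rfl⟩
      exact ⟨p * p' + a ^ 2 * (q * q'),
        add_mem (mul_mem hp hp') (mul_mem (P.pow_two_mem a) (mul_mem hq hq')),
        p * q' + q * p', add_mem (mul_mem hp hq') (mul_mem hq hp'), by ring⟩)
    (fun b => ⟨b * b, P.mul_self_mem b, 0, zero_mem P, by simp⟩) hneg
  have hPQ : P ≤ Q := fun p hp => ⟨p, hp, 0, zero_mem P, by simp⟩
  exact ha (hP hPQ ⟨0, zero_mem P, 1, one_mem P, by simp⟩)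

theorem isOrdering_of_isMax {P : RingPreordering R} (hP : IsMax P) : P.IsOrdering := by
  refine RingPreordering.isOrdering_iff.2 fun a b hab => ?_
  by_contra! h
  obtain ⟨p, hp, q, hq, hpq⟩ := exists_neg_one_eq_add_mul_of_isMax hP h.1
  obtain ⟨p', hp', q', hq', hpq'⟩ := exists_neg_one_eq_add_mul_of_isMax hP h.2
  have key : -1 = p + p' + p * p' + -(a * b) * (q * q') := by
    linear_combination (-b * q') * hpq + (1 + p) * hpq'
  refine P.neg_one_notMem (key ▸ ?_)
  exact add_mem (add_mem (add_mem hp hp') (mul_mem hp hp')) (mul_mem hab (mul_mem hq hq'))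

theorem exists_isOrdering_ge (P : RingPreordering R) : ∃ O, P ≤ O ∧ O.IsOrdering := by
  obtain ⟨O, hPO, hO⟩ := zorn_le_nonempty_Ici₀ P (fun c _ hc Q₀ hQ₀ => by
    have hdir {x y : R} : (∃ Q ∈ c, x ∈ Q) → (∃ Q ∈ c, y ∈ Q) → ∃ Q ∈ c, x ∈ Q ∧ y ∈ Q := by
      rintro ⟨Q, hQ, hx⟩ ⟨Q', hQ', hy⟩
      rcases hc.total hQ hQ' with h | h
      · exact ⟨Q', hQ', h hx, hy⟩
      · exact ⟨Q, hQ, hx, h hy⟩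
    refine ⟨.mk' {x | ∃ Q ∈ c, x ∈ Q} ?_ ?_ (fun x => ⟨Q₀, hQ₀, Q₀.mul_self_mem x⟩) ?_,
      fun Q hQ x hx => ⟨Q, hQ, hx⟩⟩
    · intro x y hx hy
      obtain ⟨Q, hQ, hx, hy⟩ := hdir hx hy
      exact ⟨Q, hQ, add_mem hx hy⟩
    · intro x y hx hy
      obtain ⟨Q, hQ, hx, hy⟩ := hdir hx hy
      exact ⟨Q, hQ, mul_mem hx hy⟩
    · rintro ⟨Q, -, hQ⟩
      exact Q.neg_one_notMem hQ) P le_rfl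
  exact ⟨O, hPO, isOrdering_of_isMax hO⟩

theorem exists_linearOrder_forall_mem_nonneg {F : Type*} [Field F] (P : RingPreordering F) :
    ∃ (_ : LinearOrder F) (_ : IsStrictOrderedRing F), ∀ p ∈ P, 0 ≤ p := by
  classical
  obtain ⟨O, hPO, _⟩ := exists_isOrdering_ge P
  have : RingConeClass (RingPreordering F) F :=
    { eq_zero_of_mem_of_neg_mem := fun h h' => RingPreordering.eq_zero_of_mem_of_neg_mem h h' }
  let _ : LinearOrder F := .mkOfAddGroupCone O
  have : IsOrderedRing F := .mkOfCone O
  refine ⟨inferInstance, IsOrderedRing.toIsStrictOrderedRing F, fun p hp => ?_⟩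
  change p - 0 ∈ O
  simpa using hPO hp

theorem exists_ringPreordering_of_ker_eq_support {F : Type*} [Field F] (O : RingPreordering R)
    [O.IsOrdering] {φ : R →+* F} (hker : RingHom.ker φ = O.support)
    (hφ : ∀ x, ∃ a b, φ b ≠ 0 ∧ x = φ a / φ b) : ∃ P : RingPreordering F, ∀ a ∈ O, φ a ∈ P := by
  have hsupp (a : R) : φ a = 0 ↔ a ∈ O ∧ -a ∈ O := by
    rw [← RingHom.mem_ker, hker, RingPreordering.mem_support]
  refine ⟨.mk' {x | ∃ a ∈ O, ∃ b, φ b ≠ 0 ∧ x * φ b ^ 2 = φ a} ?_ ?_ ?_ ?_,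
    fun a ha => ⟨a, ha, 1, by simp, by simp⟩⟩
  · rintro x y ⟨a, ha, b, hb, hx⟩ ⟨a', ha', b', hb', hy⟩
    refine ⟨a * b' ^ 2 + a' * b ^ 2,
      add_mem (mul_mem ha (O.pow_two_mem _)) (mul_mem ha' (O.pow_two_mem _)),
      b * b', by simp [hb, hb'], ?_⟩
    simp only [map_mul, map_add, map_pow, ← hx, ← hy]
    ring
  · rintro x y ⟨a, ha, b, hb, hx⟩ ⟨a', ha', b', hb', hy⟩
    refine ⟨a * a', mul_mem ha ha', b * b', by simp [hb, hb'], ?_⟩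
    simp only [map_mul, ← hx, ← hy]
    ring
  · intro x
    obtain ⟨a, b, hb, rfl⟩ := hφ x
    refine ⟨a * a, O.mul_self_mem a, b, hb, ?_⟩
    rw [map_mul]
    field_simp
  · rintro ⟨a, ha, b, hb, h⟩
    have hab : -(a + b ^ 2) ∈ O := ((hsupp (a + b ^ 2)).1 (by rw [map_add, map_pow, ← h]; ring)).2
    have hb2 : φ (b ^ 2) = 0 := (hsupp _).2 ⟨O.pow_two_mem b, by simpa using add_mem ha hab⟩
    exact hb (by simpa using hb2)

end Ordering

/-! ### Ordered extensions with the intermediate value property -/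

section HasIVT

variable {K : Type*} [Field K] [LinearOrder K] [IsStrictOrderedRing K]

theorem hasIVT_C (x : K) : HasIVT (C x) := fun a b _ h => by
  simpa using h.not_ge (by simpa using mul_self_nonneg x)

theorem hasIVT_X_sub_C (x : K) : HasIVT (X - C x) := fun a b hab h => by
  simp only [eval_sub, eval_X, eval_C] at h
  rcases mul_neg_iff.1 h with ⟨ha, hb⟩ | ⟨ha, hb⟩
  · linarith
  · exact ⟨x, ⟨sub_neg.1 ha, sub_pos.1 hb⟩, by simp⟩

theorem HasIVT.mul {p q : K[X]} (hp : HasIVT p) (hq : HasIVT q) : HasIVT (p * q) := by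
  intro a b hab h
  have hpq : p.eval a * p.eval b < 0 ∨ q.eval a * q.eval b < 0 := by
    by_contra! hpq
    have := mul_nonneg hpq.1 hpq.2
    rw [eval_mul, eval_mul] at h
    linarith
  rcases hpq with h | h
  · obtain ⟨c, hc, hpc⟩ := hp a b hab h
    exact ⟨c, hc, by simp [hpc]⟩
  · obtain ⟨c, hc, hqc⟩ := hq a b hab h
    exact ⟨c, hc, by simp [hqc]⟩

theorem hasIVT_of_irreducible_of_isRoot {p : K[X]} (hp : Irreducible p) {x : K}
    (hx : p.IsRoot x) : HasIVT p := by
  obtain ⟨q, rfl⟩ := dvd_iff_isRoot.2 hx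
  have hq := (hp.isUnit_or_isUnit rfl).resolve_left (not_isUnit_X_sub_C x)
  obtain ⟨c, -, rfl⟩ := isUnit_iff.1 hq
  exact (hasIVT_X_sub_C x).mul (hasIVT_C c)

theorem polynomialIVT_of_forall_irreducible
    (h : ∀ p : K[X], Irreducible p → (∀ q : K[X], q.natDegree < p.natDegree → HasIVT q) →
      HasIVT p) : PolynomialIVT K := by
  intro p
  induction hn : p.natDegree using Nat.strong_induction_on generalizing p with
  | _ n ih =>
    subst hn
    by_cases hirr : Irreducible p
    · exact h p hirr fun q hq => ih _ hq q rfl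
    rcases eq_or_ne p.natDegree 0 with hp | hp
    · rw [eq_C_of_natDegree_eq_zero hp]
      exact hasIVT_C _
    have hunit : ¬IsUnit p := fun hu => hp (natDegree_eq_zero_of_isUnit hu)
    simp only [irreducible_iff, not_and, not_forall, not_or] at hirr
    obtain ⟨q, r, rfl, hq, hr⟩ := hirr hunit
    have hqr : q * r ≠ 0 := fun h0 => hp (by simp [h0])
    have hdeg {f : K[X]} (hf : f ≠ 0) (hu : ¬IsUnit f) : 0 < f.natDegree :=
      natDegree_pos_iff_degree_pos.2 (degree_pos_of_ne_zero_of_nonunit hf hu)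
    have hq0 := hdeg (left_ne_zero_of_mul hqr) hq
    have hr0 := hdeg (right_ne_zero_of_mul hqr) hr
    have hmul := natDegree_mul (left_ne_zero_of_mul hqr) (right_ne_zero_of_mul hqr)
    exact (ih _ (by omega) q rfl).mul (ih _ (by omega) r rfl)

/-- The cofactor of `p` in `1 + s` would have smaller degree than `p` and change sign with it. -/
theorem not_dvd_one_add_of_eval_mul_eval_neg {p s : K[X]}
    (hp : ∀ q : K[X], q.natDegree < p.natDegree → HasIVT q)
    {a b : K} (hab : a < b) (h : p.eval a * p.eval b < 0) (hs : ∀ c, 0 ≤ s.eval c)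
    (hdeg : s.natDegree ≤ 2 * (p.natDegree - 1)) : ¬p ∣ 1 + s := by
  rintro ⟨q, hq⟩
  have hpos (c : K) : 0 < p.eval c * q.eval c := by
    rw [← eval_mul, ← hq, eval_add, eval_one]
    linarith [hs c]
  have hp0 : p ≠ 0 := by rintro rfl; simp at h
  have hq0 : q ≠ 0 := by rintro rfl; simpa using hpos 0
  have hpdeg : p.natDegree ≠ 0 := fun h0 => by
    rw [eq_C_of_natDegree_eq_zero h0] at h
    simpa using h.not_ge (by simpa using mul_self_nonneg _)
  have hqdeg : q.natDegree < p.natDegree := by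
    have h1 : (1 + s).natDegree ≤ 2 * (p.natDegree - 1) :=
      (natDegree_add_le _ _).trans (by simpa using hdeg)
    rw [hq, natDegree_mul hp0 hq0] at h1
    omega
  have hqab : q.eval a * q.eval b < 0 := by
    have hab0 := mul_pos (hpos a) (hpos b)
    rw [mul_mul_mul_comm] at hab0
    exact neg_of_mul_pos_right hab0 h.le
  obtain ⟨c, -, hc⟩ := hp q hqdeg a b hab hqab
  simpa [hc] using hpos c

end HasIVT

section ConeSup

variable {F E : Type*} [Field F] [Field E] [Algebra F E]

/-- The subsemiring of `E` generated by a preordering `P` of the base field and the squares of an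
intermediate field `K`. It is the sum closure of the products `p * k ^ 2`, and `K` has an ordering
extending `P` if and only if `-1` does not belong to it. -/
def coneSup (P : RingPreordering F) (K : IntermediateField F E) : Subsemiring E :=
  Submonoid.subsemiringClosure
    { carrier := {x | ∃ p ∈ P, ∃ k ∈ K, x = algebraMap F E p * k ^ 2}
      one_mem' := ⟨1, one_mem P, 1, one_mem K, by simp⟩
      mul_mem' := by
        rintro _ _ ⟨p, hp, k, hk, rfl⟩ ⟨q, hq, l, hl, rfl⟩
        exact ⟨p * q, mul_mem hp hq, k * l, mul_mem hk hl, by rw [map_mul]; ring⟩ }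

variable {P : RingPreordering F} {K L : IntermediateField F E}

theorem algebraMap_mul_sq_mem_coneSup {p : F} (hp : p ∈ P) {k : E} (hk : k ∈ K) :
    algebraMap F E p * k ^ 2 ∈ coneSup P K :=
  AddSubmonoid.subset_closure ⟨p, hp, k, hk, rfl⟩

@[elab_as_elim]
theorem coneSup_induction {motive : ∀ x : E, x ∈ coneSup P K → Prop} (zero : motive 0 (zero_mem _))
    (add : ∀ x y hx hy, motive x hx → motive y hy → motive (x + y) (add_mem hx hy))
    (mul_sq : ∀ p (hp : p ∈ P) k (hk : k ∈ K),
      motive (algebraMap F E p * k ^ 2) (algebraMap_mul_sq_mem_coneSup hp hk))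
    {x : E} (hx : x ∈ coneSup P K) : motive x hx := by
  induction hx using AddSubmonoid.closure_induction with
  | zero => exact zero
  | add x y hx hy ihx ihy => exact add x y hx hy ihx ihy
  | mem x hx =>
    obtain ⟨p, hp, k, hk, rfl⟩ := hx
    exact mul_sq p hp k hk

theorem coneSup_mono (h : K ≤ L) : coneSup P K ≤ coneSup P L := fun x hx => by
  induction hx using coneSup_induction with
  | zero => exact zero_mem _
  | add x y _ _ hx hy => exact add_mem hx hy
  | mul_sq p hp k hk => exact algebraMap_mul_sq_mem_coneSup hp (h hk)

theorem neg_one_notMem_coneSup_bot : (-1 : E) ∉ coneSup P (⊥ : IntermediateField F E) := by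
  have key {x : E} (hx : x ∈ coneSup P (⊥ : IntermediateField F E)) :
      ∃ p ∈ P, algebraMap F E p = x := by
    induction hx using coneSup_induction with
    | zero => exact ⟨0, zero_mem P, map_zero _⟩
    | add x y _ _ hx hy =>
      obtain ⟨p, hp, rfl⟩ := hx
      obtain ⟨q, hq, rfl⟩ := hy
      exact ⟨p + q, add_mem hp hq, map_add _ p q⟩
    | mul_sq p hp k hk =>
      obtain ⟨k, rfl⟩ := IntermediateField.mem_bot.1 hk
      exact ⟨p * k ^ 2, mul_mem hp (P.pow_two_mem k), by simp⟩
  intro h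
  obtain ⟨p, hp, hp1⟩ := key h
  have hp1 : p = -1 := (algebraMap F E).injective (by simpa using hp1)
  exact P.neg_one_notMem (hp1 ▸ hp)

theorem exists_mem_coneSup_of_mem_coneSup_iSup {c : Set (IntermediateField F E)}
    (hc : IsChain (· ≤ ·) c) (hne : c.Nonempty) {x : E}
    (hx : x ∈ coneSup P (⨆ K : c, (K : IntermediateField F E))) : ∃ K ∈ c, x ∈ coneSup P K := by
  have : Nonempty c := hne.to_subtype
  induction hx using coneSup_induction with
  | zero => exact ⟨_, hne.some_mem, zero_mem _⟩
  | add x y _ _ hx hy =>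
    obtain ⟨K, hK, hx⟩ := hx
    obtain ⟨L, hL, hy⟩ := hy
    rcases hc.total hK hL with h | h
    · exact ⟨L, hL, add_mem (coneSup_mono h hx) hy⟩
    · exact ⟨K, hK, add_mem hx (coneSup_mono h hy)⟩
  | mul_sq p hp k hk =>
    rw [← SetLike.mem_coe, IntermediateField.coe_iSup_of_directed hc.directed,
      Set.mem_iUnion] at hk
    obtain ⟨K, hk⟩ := hk
    exact ⟨K, K.2, algebraMap_mul_sq_mem_coneSup hp hk⟩

theorem exists_maximal_neg_one_notMem_coneSup (P : RingPreordering F) :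
    ∃ K : IntermediateField F E, Maximal (fun K => (-1 : E) ∉ coneSup P K) K := by
  obtain ⟨K, -, hK⟩ := zorn_le_nonempty₀ {K : IntermediateField F E | (-1 : E) ∉ coneSup P K}
    (fun c hc hchain L hL => by
      refine ⟨⨆ K : c, (K : IntermediateField F E), fun h => ?_,
        fun K hK => le_iSup (fun K : c => (K : IntermediateField F E)) ⟨K, hK⟩⟩
      obtain ⟨K, hK, h1⟩ := exists_mem_coneSup_of_mem_coneSup_iSup hchain ⟨L, hL⟩ h
      exact hc hK h1) ⊥ neg_one_notMem_coneSup_bot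
  exact ⟨K, hK⟩

theorem exists_linearOrder_forall_algebraMap_nonneg (hK : (-1 : E) ∉ coneSup P K) :
    ∃ (_ : LinearOrder K) (_ : IsStrictOrderedRing K), ∀ p ∈ P, 0 ≤ algebraMap F K p := by
  obtain ⟨_, _, hpos⟩ := exists_linearOrder_forall_mem_nonneg
    (RingPreordering.mk' {x : K | (x : E) ∈ coneSup P K} (fun hx hy => (coneSup P K).add_mem hx hy)
      (fun hx hy => (coneSup P K).mul_mem hx hy)
      (fun x => by simpa [sq] using algebraMap_mul_sq_mem_coneSup (one_mem P) x.2)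
      (by simpa using hK))
  refine ⟨_, ‹_›, fun p hp => hpos _ ?_⟩
  simpa using algebraMap_mul_sq_mem_coneSup hp (one_mem K)

theorem exists_natDegree_lt_aeval_eq_of_mem_adjoin {K : Type*} [Field K] [Algebra K E] {g : K[X]}
    (hg : g.natDegree ≠ 0) {α : E} (hα : aeval α g = 0) {x : E}
    (hx : x ∈ IntermediateField.adjoin K {α}) :
    ∃ f : K[X], f.natDegree < g.natDegree ∧ aeval α f = x := by
  have halg : IsAlgebraic K α := ⟨g, by rintro rfl; simp at hg, hα⟩
  rw [← IntermediateField.mem_toSubalgebra,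
    IntermediateField.adjoin_simple_toSubalgebra_of_isAlgebraic halg,
    Algebra.adjoin_singleton_eq_range_aeval] at hx
  obtain ⟨f, hf⟩ := hx
  refine ⟨f % g, natDegree_mod_lt f hg, ?_⟩
  rw [← show aeval α f = x from hf]
  conv_rhs => rw [← EuclideanDomain.div_add_mod f g]
  simp [hα]

theorem exists_nonneg_aeval_eq_of_mem_coneSup_adjoin [LinearOrder K] [IsStrictOrderedRing K]
    (hP : ∀ p ∈ P, 0 ≤ algebraMap F K p) {g : K[X]} (hg : g.natDegree ≠ 0) {α : E}
    (hα : aeval α g = 0) {x : E}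
    (hx : x ∈ coneSup P ((IntermediateField.adjoin K {α}).restrictScalars F)) :
    ∃ s : K[X], (∀ c, 0 ≤ s.eval c) ∧ s.natDegree ≤ 2 * (g.natDegree - 1) ∧ aeval α s = x := by
  induction hx using coneSup_induction with
  | zero => exact ⟨0, by simp, by simp, map_zero _⟩
  | add x y _ _ hx hy =>
    obtain ⟨s, hs, hsdeg, rfl⟩ := hx
    obtain ⟨t, ht, htdeg, rfl⟩ := hy
    refine ⟨s + t, fun c => ?_, (natDegree_add_le s t).trans (max_le hsdeg htdeg), map_add _ s t⟩
    rw [eval_add]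
    exact add_nonneg (hs c) (ht c)
  | mul_sq p hp k hk =>
    obtain ⟨f, hfdeg, rfl⟩ := exists_natDegree_lt_aeval_eq_of_mem_adjoin hg hα hk
    refine ⟨C (algebraMap F K p) * f ^ 2, fun c => ?_, ?_, ?_⟩
    · rw [eval_C_mul, eval_pow]
      exact mul_nonneg (hP p hp) (sq_nonneg _)
    · refine (natDegree_C_mul_le _ _).trans (natDegree_pow_le.trans ?_)
      omega
    · rw [map_mul, map_pow, aeval_C, ← IsScalarTower.algebraMap_apply]

theorem polynomialIVT_of_maximal_neg_one_notMem_coneSup [IsAlgClosed E]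
    (hK : Maximal (fun K => (-1 : E) ∉ coneSup P K) K) [LinearOrder K] [IsStrictOrderedRing K]
    (hP : ∀ p ∈ P, 0 ≤ algebraMap F K p) : PolynomialIVT K := by
  refine polynomialIVT_of_forall_irreducible fun g hg hlow => ?_
  obtain ⟨α, hα⟩ := IsAlgClosed.exists_aeval_eq_zero E g (degree_pos_of_irreducible hg).ne'
  by_cases hαK : α ∈ K
  · refine hasIVT_of_irreducible_of_isRoot hg (x := ⟨α, hαK⟩) ?_
    refine (algebraMap K E).injective ?_
    rw [← aeval_algebraMap_apply_eq_algebraMap_eval, map_zero]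
    exact hα
  · have hle : K ≤ (IntermediateField.adjoin K {α}).restrictScalars F := fun x hx =>
      (IntermediateField.adjoin K {α}).algebraMap_mem ⟨x, hx⟩
    have hcone : (-1 : E) ∈ coneSup P ((IntermediateField.adjoin K {α}).restrictScalars F) := by
      by_contra hneg
      exact hαK (hK.le_of_ge hneg hle (IntermediateField.mem_adjoin_simple_self K α))
    obtain ⟨s, hs, hsdeg, hsα⟩ := exists_nonneg_aeval_eq_of_mem_coneSup_adjoin hP
      hg.natDegree_pos.ne' hα hcone
    have hdvd : g ∣ 1 + s := by
      refine (dvd_mul_right g (C g.leadingCoeff⁻¹)).trans ?_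
      rw [minpoly.eq_of_irreducible hg hα]
      exact minpoly.dvd K α (by simp [hsα])
    exact fun a b hab h => absurd hdvd (not_dvd_one_add_of_eval_mul_eval_neg hlow hab h hs hsdeg)

end ConeSup

theorem exists_polynomialIVT_forall_mem_nonneg {F : Type u} [Field F] (P : RingPreordering F) :
    ∃ (K : Type u) (_ : Field K) (_ : LinearOrder K) (_ : IsStrictOrderedRing K) (ι : F →+* K),
      PolynomialIVT K ∧ ∀ p ∈ P, 0 ≤ ι p := by
  obtain ⟨K, hK⟩ := exists_maximal_neg_one_notMem_coneSup (E := AlgebraicClosure F) P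
  obtain ⟨_, _, hP⟩ := exists_linearOrder_forall_algebraMap_nonneg hK.prop
  exact ⟨K, inferInstance, _, ‹_›, algebraMap F K,
    polynomialIVT_of_maximal_neg_one_notMem_coneSup hK hP, hP⟩

/-! ### The Positivstellensatz -/

section Positivstellensatz

theorem polynomialIVT_real : PolynomialIVT ℝ := by
  intro p a b hab h
  have hcont : ContinuousOn (p.eval ·) (Set.Icc a b) := p.continuousOn
  rcases mul_neg_iff.1 h with ⟨ha, hb⟩ | ⟨ha, hb⟩
  · exact intermediate_value_Ioo' hab.le hcont ⟨hb, ha⟩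
  · exact intermediate_value_Ioo hab.le hcont ⟨ha, hb⟩

theorem exists_polynomialIVT_ringHom_nonneg {R : Type u} [CommRing R] (P : RingPreordering R) :
    ∃ (K : Type u) (_ : Field K) (_ : LinearOrder K) (_ : IsStrictOrderedRing K) (ψ : R →+* K),
      PolynomialIVT K ∧ ∀ p ∈ P, 0 ≤ ψ p := by
  obtain ⟨O, hPO, _⟩ := exists_isOrdering_ge P
  let φ := (algebraMap (R ⧸ O.support) (FractionRing (R ⧸ O.support))).comp
    (Ideal.Quotient.mk O.support)
  have hker : RingHom.ker φ = O.support := by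
    rw [RingHom.ker_comp_of_injective _ (IsFractionRing.injective _ _), Ideal.mk_ker]
  have hφ (x) : ∃ a b, φ b ≠ 0 ∧ x = φ a / φ b := by
    obtain ⟨a, b, hb, rfl⟩ := IsFractionRing.div_surjective (A := R ⧸ O.support) x
    obtain ⟨a, rfl⟩ := Ideal.Quotient.mk_surjective a
    obtain ⟨b, rfl⟩ := Ideal.Quotient.mk_surjective b
    exact ⟨a, b, (IsLocalization.map_units (FractionRing (R ⧸ O.support)) ⟨_, hb⟩).ne_zero, rfl⟩
  obtain ⟨Q, hQ⟩ := exists_ringPreordering_of_ker_eq_support O hker hφ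
  obtain ⟨K, _, _, _, ι, hK, hι⟩ := exists_polynomialIVT_forall_mem_nonneg Q
  exact ⟨K, _, _, ‹_›, ι.comp φ, hK, fun p hp => hι _ (hQ p (hPO hp))⟩

variable {A : Type*} [CommRing A] [Algebra ℝ A] [Algebra.FiniteType ℝ A]

/-- The values of the generators of `A` under `ψ` are replaced by real numbers with the same signs
on the finitely many relations defining `A`, and on representatives of the elements of `S`. -/
theorem exists_algHom_real_sign_eq {K : Type*} [Field K] [LinearOrder K] [IsStrictOrderedRing K]
    (hK : PolynomialIVT K) (ψ : A →+* K) (S : Finset A) :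
    ∃ χ : A →ₐ[ℝ] ℝ, ∀ s ∈ S, SignType.sign (χ s) = SignType.sign (ψ s) := by
  classical
  obtain ⟨n, π, hπ⟩ := Algebra.FiniteType.iff_quotient_mvPolynomial''.1 ‹_›
  obtain ⟨G, hG⟩ := (isNoetherianRing_iff_ideal_fg _).1 inferInstance (RingHom.ker π)
  have hι (r : ℝ) : SignType.sign (ψ.comp (algebraMap ℝ A) r) =
      SignType.sign (RingHom.id ℝ r) := by
    refine StrictMono.sign_comp ((ringHom_monotone (fun r hr => ?_) _).strictMono_of_injective
      (ψ.comp (algebraMap ℝ A)).injective) r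
    exact Real.isSquare_iff.2 hr
  obtain ⟨b, hb⟩ := exists_sign_eval₂_eq hK polynomialIVT_real _ _ hι
    (fun i => ψ (π (MvPolynomial.X i))) (G ∪ S.image (Function.surjInv hπ))
  have heval (p) : p.eval₂ (ψ.comp (algebraMap ℝ A)) (fun i => ψ (π (MvPolynomial.X i))) =
      ψ (π p) := by
    rw [← MvPolynomial.hom_eval₂]
    exact congrArg ψ (DFunLike.congr_fun (MvPolynomial.aeval_unique π).symm p)
  have hker : RingHom.ker π ≤ RingHom.ker (MvPolynomial.aeval (R := ℝ) b) := by
    rw [← hG, Ideal.span_le]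
    intro g hg
    have hπg : π g = 0 := by
      rw [← RingHom.mem_ker, ← hG]
      exact Ideal.subset_span hg
    have := hb g (Finset.mem_union_left _ hg)
    rw [heval, hπg, map_zero, sign_zero, eq_comm, sign_eq_zero_iff] at this
    exact this
  refine ⟨AlgHom.liftOfSurjective π hπ _ hker, fun s hs => ?_⟩
  have hs := hb _ (Finset.mem_union_right _ (Finset.mem_image_of_mem _ hs))
  have hlift := AlgHom.liftOfSurjective_apply π hπ _ hker (Function.surjInv hπ s)
  rw [Function.surjInv_eq hπ] at hlift
  rw [heval, Function.surjInv_eq hπ] at hs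
  rw [hlift, hs]
  rfl

theorem isInPreordering_neg_one {S : Set A} (hS : S.Finite)
    (h : ∀ χ : A →ₐ[ℝ] ℝ, ∃ s ∈ S, χ s < 0) : IsInPreordering S (-1) := by
  by_contra hneg
  obtain ⟨K, _, _, _, ψ, hK, hψ⟩ := exists_polynomialIVT_ringHom_nonneg
    (.mk' {a | IsInPreordering S a} .add .mul (fun a => sq a ▸ .sq a) hneg)
  obtain ⟨χ, hχ⟩ := exists_algHom_real_sign_eq hK ψ hS.toFinset
  obtain ⟨s, hs, hχs⟩ := h χ
  have hψs : 0 ≤ ψ s := hψ s (.gen hs)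
  rw [← sign_nonneg_iff, ← hχ s (hS.mem_toFinset.2 hs), sign_nonneg_iff] at hψs
  exact hχs.not_ge hψs

end Positivstellensatz

/-! ### Preorderings and sums of squares -/

namespace IsInPreordering

variable {A B : Type*} [CommRing A] [CommRing B] {S : Set A}

theorem one : IsInPreordering S (1 : A) := one_pow (M := A) 2 ▸ .sq 1

theorem zero : IsInPreordering S (0 : A) := zero_pow (M₀ := A) two_ne_zero ▸ .sq 0

theorem map (φ : A →+* B) {a : A} (h : IsInPreordering S a) : IsInPreordering (φ '' S) (φ a) := by
  induction h with
  | sq a => exact map_pow φ a 2 ▸ .sq _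
  | gen h => exact .gen (Set.mem_image_of_mem φ h)
  | add _ _ ha hb => exact map_add φ _ _ ▸ .add ha hb
  | mul _ _ ha hb => exact map_mul φ _ _ ▸ .mul ha hb

theorem mono {S' : Set A} (hS : S ⊆ S') {a : A} (h : IsInPreordering S a) :
    IsInPreordering S' a := by
  induction h with
  | sq a => exact .sq a
  | gen h => exact .gen (hS h)
  | add _ _ ha hb => exact .add ha hb
  | mul _ _ ha hb => exact .mul ha hb

theorem exists_eq_of_map {φ : A →+* B} (hφ : Function.Surjective φ) {b : B}
    (h : IsInPreordering (φ '' S) b) : ∃ a, IsInPreordering S a ∧ φ a = b := by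
  induction h with
  | sq b =>
    obtain ⟨a, rfl⟩ := hφ b
    exact ⟨a ^ 2, .sq a, map_pow φ a 2⟩
  | gen h =>
    obtain ⟨a, ha, rfl⟩ := h
    exact ⟨a, .gen ha, rfl⟩
  | add _ _ ha hb =>
    obtain ⟨a, ha, rfl⟩ := ha
    obtain ⟨b, hb, rfl⟩ := hb
    exact ⟨a + b, .add ha hb, map_add φ a b⟩
  | mul _ _ ha hb =>
    obtain ⟨a, ha, rfl⟩ := ha
    obtain ⟨b, hb, rfl⟩ := hb
    exact ⟨a * b, .mul ha hb, map_mul φ a b⟩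

theorem exists_eq_add_mul_of_insert {b a : A} (h : IsInPreordering (insert b S) a) :
    ∃ p q, IsInPreordering S p ∧ IsInPreordering S q ∧ a = p + b * q := by
  induction h with
  | sq a => exact ⟨a ^ 2, 0, .sq a, .zero, by ring⟩
  | gen h =>
    obtain rfl | h := h
    · exact ⟨0, 1, .zero, .one, by ring⟩
    · exact ⟨_, 0, .gen h, .zero, by ring⟩
  | add _ _ ha hb =>
    obtain ⟨p, q, hp, hq, rfl⟩ := ha
    obtain ⟨p', q', hp', hq', rfl⟩ := hb
    exact ⟨p + p', q + q', .add hp hp', .add hq hq', by ring⟩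
  | mul _ _ ha hb =>
    obtain ⟨p, q, hp, hq, rfl⟩ := ha
    obtain ⟨p', q', hp', hq', rfl⟩ := hb
    exact ⟨p * p' + b ^ 2 * (q * q'), p * q' + q * p',
      .add (.mul hp hp') (.mul (.sq b) (.mul hq hq')), .add (.mul hp hq') (.mul hq hp'), by ring⟩

variable [Algebra ℝ A]

theorem algebraMap {c : ℝ} (hc : 0 ≤ c) : IsInPreordering S (algebraMap ℝ A c) := by
  rw [← Real.sq_sqrt hc, map_pow]
  exact .sq _

end IsInPreordering

section SumOfSquares

theorem eval_nonneg_of_finite_compl (p : ℝ[X]) {s : Set ℝ} (hs : s.Finite)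
    (h : ∀ x ∉ s, 0 ≤ p.eval x) (x : ℝ) : 0 ≤ p.eval x :=
  (isClosed_le continuous_const p.continuous).closure_subset_iff.2 h (hs.countable.dense_compl ℝ x)

theorem exists_eq_add_sq_mul_of_eval_nonneg {p : ℝ[X]} (hdeg : p.natDegree ≠ 0)
    (hp : ∀ x, 0 ≤ p.eval x) :
    ∃ r, ∃ w : ℝ[X], p = C (p.eval r) + (X - C r) ^ 2 * w ∧ w.natDegree < p.natDegree ∧
      ∀ x, 0 ≤ w.eval x := by
  obtain ⟨r, hr⟩ := p.exists_forall_norm_le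
  simp only [Real.norm_of_nonneg (hp _)] at hr
  have hp0 : p - C (p.eval r) ≠ 0 := fun h => hdeg (by rw [sub_eq_zero.1 h, natDegree_C])
  have hderiv : p.derivative.eval r = 0 := by
    have hmin : IsLocalMin (p.eval ·) r := .of_forall hr
    rw [← Polynomial.deriv, hmin.deriv_eq_zero]
  obtain ⟨w, hw⟩ : (X - C r) ^ 2 ∣ p - C (p.eval r) := by
    rw [← le_rootMultiplicity_iff hp0, Nat.succ_le_iff, one_lt_rootMultiplicity_iff_isRoot hp0]
    simp [hderiv]
  have hpw : p = C (p.eval r) + (X - C r) ^ 2 * w := by rw [← hw]; ring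
  have hw0 : w ≠ 0 := by rintro rfl; exact hp0 (by rw [hw, mul_zero])
  refine ⟨r, w, hpw, ?_, eval_nonneg_of_finite_compl w (Set.finite_singleton r) fun x hx => ?_⟩
  · rw [← natDegree_sub_C (p := p) (a := p.eval r), hw,
      natDegree_mul (pow_ne_zero 2 (X_sub_C_ne_zero r)) hw0, natDegree_pow, natDegree_X_sub_C]
    lia
  · have hxr : 0 < (x - r) ^ 2 := by have := sub_ne_zero.2 hx; positivity
    have heval : p.eval x = p.eval r + (x - r) ^ 2 * w.eval x := by
      simpa using congrArg (eval x) hpw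
    exact nonneg_of_mul_nonneg_right (by linarith [hr x]) hxr

theorem isInPreordering_of_eval_nonneg {S : Set ℝ[X]} {p : ℝ[X]} (hp : ∀ x, 0 ≤ p.eval x) :
    IsInPreordering S p := by
  induction hn : p.natDegree using Nat.strong_induction_on generalizing p with
  | _ n ih =>
    by_cases hdeg : p.natDegree = 0
    · obtain ⟨c, rfl⟩ := natDegree_eq_zero.1 hdeg
      exact .algebraMap (by simpa using hp 0)
    · obtain ⟨r, w, hpw, hw, hw0⟩ := exists_eq_add_sq_mul_of_eval_nonneg hdeg hp
      rw [hpw]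
      exact .add (.algebraMap (hp r)) (.mul (.sq _) (ih _ (hn ▸ hw) hw0 rfl))

theorem isInPreordering_aeval {A : Type*} [CommRing A] [Algebra ℝ A] {S : Set A} {p : ℝ[X]}
    (hp : ∀ x, 0 ≤ p.eval x) (a : A) : IsInPreordering S (aeval a p) :=
  ((isInPreordering_of_eval_nonneg (S := ∅) hp).map (aeval a : ℝ[X] →ₐ[ℝ] A).toRingHom).mono
    (by simp)

end SumOfSquares

section LocalizedLine

theorem exists_mem_forall_dvd_pow_of_fg {M : Type*} [CommMonoid M] {𝔻 : Submonoid M}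
    (h𝔻 : 𝔻.FG) : ∃ g ∈ 𝔻, ∀ q ∈ 𝔻, ∃ n, q ∣ g ^ n := by
  obtain ⟨F, rfl⟩ := h𝔻
  refine ⟨∏ x ∈ F, x, Submonoid.prod_mem _ fun x hx => Submonoid.subset_closure hx,
    fun q hq => ?_⟩
  induction hq using Submonoid.closure_induction with
  | mem x hx => exact ⟨1, by rw [pow_one]; exact Finset.dvd_prod_of_mem _ hx⟩
  | one => exact ⟨0, one_dvd _⟩
  | mul x y _ _ hx hy =>
    obtain ⟨m, hm⟩ := hx
    obtain ⟨n, hn⟩ := hy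
    exact ⟨m + n, by rw [pow_add]; exact mul_dvd_mul hm hn⟩

theorem exists_mem_forall_map_ne_zero_of_fg {R : Type*} [CommSemiring R] {𝔻 : Submonoid R}
    (h𝔻 : 𝔻.FG) : ∃ g ∈ 𝔻, ∀ φ : R →+* ℝ, φ g ≠ 0 → ∀ q ∈ 𝔻, φ q ≠ 0 := by
  obtain ⟨g, hg, hdvd⟩ := exists_mem_forall_dvd_pow_of_fg h𝔻
  refine ⟨g, hg, fun φ hφ q hq hq0 => ?_⟩
  obtain ⟨n, hn⟩ := hdvd q hq
  exact pow_ne_zero n hφ (by simpa [hq0] using map_dvd φ hn)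

variable {ℰ : Submonoid ℝ[X]}

theorem isInPreordering_localization_of_forall_algHom_nonneg (hℰ0 : 0 ∉ ℰ) (hℰ : ℰ.FG)
    {e : Localization ℰ} (he : ∀ χ : Localization ℰ →ₐ[ℝ] ℝ, 0 ≤ χ e) {S : Set (Localization ℰ)} :
    IsInPreordering S e := by
  obtain ⟨⟨p, w⟩, hpw⟩ := IsLocalization.surj ℰ e
  obtain ⟨g, hg, hgℰ⟩ := exists_mem_forall_map_ne_zero_of_fg hℰ
  have hg0 : g ≠ 0 := by rintro rfl; exact hℰ0 hg
  have hpos : ∀ s, 0 ≤ (p * w).eval s := by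
    refine eval_nonneg_of_finite_compl _ (g.rootSet_finite ℝ) fun s hs => ?_
    have hgs : aeval s g ≠ 0 := fun h => hs (mem_rootSet.2 ⟨hg0, h⟩)
    let χ : Localization ℰ →ₐ[ℝ] ℝ := IsLocalization.liftAlgHom (M := ℰ) (f := aeval s)
      fun q => (hgℰ (aeval s : ℝ[X] →ₐ[ℝ] ℝ).toRingHom hgs q q.2).isUnit
    have hχ (q : ℝ[X]) : χ (algebraMap ℝ[X] _ q) = q.eval s := by
      simp [χ, IsLocalization.liftAlgHom_apply]
    have := congrArg χ hpw
    rw [map_mul, hχ, hχ] at this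
    rw [eval_mul, ← this, mul_assoc]
    exact mul_nonneg (he χ) (mul_self_nonneg _)
  obtain ⟨v, hv⟩ := (IsLocalization.map_units (Localization ℰ) w).exists_right_inv
  have heq : e = aeval (algebraMap ℝ[X] (Localization ℰ) X) (p * (w : ℝ[X])) * v ^ 2 := by
    rw [aeval_algebraMap_apply, aeval_X_left_apply, map_mul, ← hpw]
    linear_combination (-e * (1 + algebraMap ℝ[X] (Localization ℰ) w * v)) * hv
  rw [heq]
  exact .mul (isInPreordering_aeval hpos _) (.sq v)

end LocalizedLine

/-! ### Positive functionals -/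

theorem mul_le_mul_succ_of_sq_le_mul {m : ℕ → ℝ} (hm : ∀ n, 0 ≤ m n)
    (hlog : ∀ n, m (n + 1) ^ 2 ≤ m n * m (n + 2)) (n : ℕ) : m 1 * m n ≤ m 0 * m (n + 1) := by
  induction n with
  | zero => rw [mul_comm]
  | succ n ih =>
    obtain h | h := (hm (n + 1)).eq_or_lt
    · rw [← h, mul_zero]
      exact mul_nonneg (hm 0) (hm _)
    · have hn : 0 < m n := (hm n).lt_of_ne' fun h0 => by
        have := hlog n
        rw [h0, zero_mul] at this
        exact (pow_pos h 2).not_ge this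
      refine le_of_mul_le_mul_left ?_ hn
      calc m n * (m 1 * m (n + 1)) = m 1 * m n * m (n + 1) := by ring
        _ ≤ m 0 * m (n + 1) * m (n + 1) := by gcongr
        _ = m 0 * m (n + 1) ^ 2 := by ring
        _ ≤ m 0 * (m n * m (n + 2)) := mul_le_mul_of_nonneg_left (hlog n) (hm 0)
        _ = m n * (m 0 * m (n + 1 + 1)) := by ring

theorem apply_one_le_mul_of_le_mul_pow {m : ℕ → ℝ} (hm : ∀ n, 0 ≤ m n)
    (hlog : ∀ n, m (n + 1) ^ 2 ≤ m n * m (n + 2)) {B c : ℝ} (hc : 0 < c)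
    (hB : ∀ n, m n ≤ B * c ^ n) : m 1 ≤ c * m 0 := by
  by_contra! hlt
  obtain h0 | h0 := (hm 0).eq_or_lt
  · have := hlog 0
    rw [← h0, zero_mul] at this
    rw [← h0, mul_zero] at hlt
    exact (pow_pos hlt 2).not_ge this
  have hρ : c < m 1 / m 0 := by rwa [lt_div_iff₀ h0]
  have hgrow (n : ℕ) : (m 1 / m 0) ^ n * m 0 ≤ m n :=
    geom_le (hc.trans hρ).le n fun k _ => by
      rw [div_mul_eq_mul_div, div_le_iff₀ h0, mul_comm (m (k + 1))]
      exact mul_le_mul_succ_of_sq_le_mul hm hlog k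
  obtain ⟨n, hn⟩ := pow_unbounded_of_one_lt (B / m 0) ((one_lt_div hc).2 hρ)
  rw [div_pow, div_lt_div_iff₀ h0 (pow_pos hc n)] at hn
  linarith [hgrow n, hB n]

/-- The linear functional `L` is nonnegative on the preordering generated by `S`. -/
def IsPositiveOn {A : Type*} [CommRing A] [Algebra ℝ A] (S : Set A) (L : A →ₗ[ℝ] ℝ) : Prop :=
  ∀ a, IsInPreordering S a → 0 ≤ L a

namespace IsPositiveOn

variable {A : Type*} [CommRing A] [Algebra ℝ A] {S : Set A} {L : A →ₗ[ℝ] ℝ}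

theorem apply_sq_nonneg (hL : IsPositiveOn S L) (a : A) : 0 ≤ L (a ^ 2) := hL _ (.sq a)

theorem comp_mulLeft (hL : IsPositiveOn S L) {a : A} (ha : IsInPreordering S a) :
    IsPositiveOn S (L ∘ₗ .mulLeft ℝ a) :=
  fun _ hb => hL _ (.mul ha hb)

theorem apply_mul_sq_le (hL : IsPositiveOn S L) (a b : A) :
    L (a * b) ^ 2 ≤ L (a ^ 2) * L (b ^ 2) := by
  have hsymm : LinearMap.IsSymm ((LinearMap.mul ℝ A).compr₂ L) :=
    ⟨fun a b => congrArg L (mul_comm a b)⟩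
  simpa [sq] using LinearMap.BilinForm.apply_sq_le_of_symm _
    (fun a => by simpa [sq] using hL.apply_sq_nonneg a) hsymm a b

theorem eq_zero_of_apply_one_eq_zero (hL : IsPositiveOn S L) (h1 : L 1 = 0) : L = 0 := by
  ext a
  simpa [h1] using hL.apply_mul_sq_le 1 a

theorem abs_apply_le (hL : IsPositiveOn S L) (a : A) : |L a| ≤ L (1 + a ^ 2) := by
  have h1 : 0 ≤ L 1 := hL 1 .one
  have ha : 0 ≤ L (a ^ 2) := hL.apply_sq_nonneg a
  have hle : L a ^ 2 ≤ L 1 * L (a ^ 2) := by simpa using hL.apply_mul_sq_le 1 a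
  rw [map_add]
  exact abs_le_of_sq_le_sq (by nlinarith) (add_nonneg h1 ha)

/-- The moments `L (h ^ (2 * n))` are log-convex, and the certificate bounds them by a multiple of
`c ^ n`; hence they grow at most by the factor `c` from the very first step. -/
theorem apply_sub_sq_nonneg_of_mul_eq (hL : IsPositiveOn S L) {h p q : A} {c : ℝ} (hc : 0 < c)
    (hp : IsInPreordering S p) (hq : IsInPreordering S q)
    (hcert : (algebraMap ℝ A c - h ^ 2) * p = 1 + q) : 0 ≤ L (algebraMap ℝ A c - h ^ 2) := by
  let m (n : ℕ) : ℝ := L ((h ^ n) ^ 2)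
  let u (n : ℕ) : ℝ := L ((h ^ n) ^ 2 * p)
  have hu0 (n : ℕ) : 0 ≤ u n := hL _ (.mul (.sq _) hp)
  have hm0 (n : ℕ) : 0 ≤ m n := hL.apply_sq_nonneg _
  have hmu (n : ℕ) : m n + u (n + 1) ≤ c * u n := by
    have hq' : 0 ≤ L ((h ^ n) ^ 2 * q) := hL _ (.mul (.sq _) hq)
    have : c * u n = m n + L ((h ^ n) ^ 2 * q) + u (n + 1) := by
      simp only [m, u, ← smul_eq_mul c, ← map_smul, ← map_add]
      congr 1
      rw [Algebra.smul_def]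
      linear_combination ((h ^ n) ^ 2) * hcert
    linarith
  have hu (n : ℕ) : u n ≤ c ^ n * u 0 := le_geom hc.le n fun k _ => by linarith [hmu k, hm0 k]
  have hm : m 1 ≤ c * m 0 := by
    refine apply_one_le_mul_of_le_mul_pow hm0 (fun n => ?_) hc (B := c * u 0) fun n => ?_
    · have := hL.apply_mul_sq_le (h ^ n) (h ^ (n + 2))
      rwa [show h ^ n * h ^ (n + 2) = (h ^ (n + 1)) ^ 2 by ring] at this
    · have := mul_le_mul_of_nonneg_left (hu n) hc.le
      linarith [hmu n, hu0 (n + 1)]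
  rw [map_sub, Algebra.algebraMap_eq_smul_one, map_smul, smul_eq_mul]
  simpa [m] using hm

theorem comp_mulLeft_sub_sq_of_mul_eq (hL : IsPositiveOn S L) {h p q : A} {c : ℝ} (hc : 0 < c)
    (hp : IsInPreordering S p) (hq : IsInPreordering S q)
    (hcert : (algebraMap ℝ A c - h ^ 2) * p = 1 + q) :
    IsPositiveOn S (L ∘ₗ .mulLeft ℝ (algebraMap ℝ A c - h ^ 2)) := fun a ha => by
  simpa [mul_comm] using (hL.comp_mulLeft ha).apply_sub_sq_nonneg_of_mul_eq hc hp hq hcert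

theorem comp_mulLeft_add (hL : IsPositiveOn S L) {u : A} {b : ℝ} (hb : 0 < b)
    (hu : IsPositiveOn S (L ∘ₗ .mulLeft ℝ (algebraMap ℝ A (b ^ 2) - u ^ 2))) :
    IsPositiveOn S (L ∘ₗ .mulLeft ℝ (algebraMap ℝ A b + u)) := fun a ha => by
  have hsq : 0 ≤ L ((algebraMap ℝ A b + u) ^ 2 * a) := hL _ (.mul (.sq _) ha)
  have heq : 2 * b * L ((algebraMap ℝ A b + u) * a) =
      L ((algebraMap ℝ A b + u) ^ 2 * a) + L ((algebraMap ℝ A (b ^ 2) - u ^ 2) * a) := by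
    rw [← smul_eq_mul, ← map_smul, ← map_add, Algebra.smul_def]
    congr 1
    simp only [map_mul, map_ofNat, map_pow]
    ring
  have h2b : 0 < 2 * b := by positivity
  exact nonneg_of_mul_nonneg_right (heq ▸ add_nonneg hsq (hu a ha)) h2b

end IsPositiveOn

section NullIdeal

variable {A : Type*} [CommRing A] [Algebra ℝ A] {S : Set A} {L : A →ₗ[ℝ] ℝ}

/-- The largest ideal contained in the kernel of `L`. Its quotient is the algebra on which the
Gelfand–Naimark–Segal representation of a positive `L` is faithful. -/
def nullIdeal (L : A →ₗ[ℝ] ℝ) : Ideal A where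
  carrier := {a | ∀ b, L (a * b) = 0}
  add_mem' ha hb c := by rw [add_mul, map_add, ha, hb, add_zero]
  zero_mem' b := by rw [zero_mul, map_zero]
  smul_mem' c a ha b := by rw [smul_eq_mul, mul_comm c, mul_assoc, ha]

theorem mem_nullIdeal {a : A} : a ∈ nullIdeal L ↔ ∀ b, L (a * b) = 0 := .rfl

theorem apply_eq_zero_of_mem_nullIdeal {a : A} (ha : a ∈ nullIdeal L) : L a = 0 := by
  simpa using ha 1

theorem sub_algebraMap_mem_nullIdeal {a : A} {r : ℝ} :
    a - algebraMap ℝ A r ∈ nullIdeal L ↔ L ∘ₗ .mulLeft ℝ a = r • L := by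
  simp [mem_nullIdeal, LinearMap.ext_iff, sub_mul, ← Algebra.smul_def, sub_eq_zero]

/-- Every element that is bounded with respect to `L` acts as a scalar modulo `nullIdeal L`.
Extreme positive functionals have this property. -/
def BoundedActAsScalars (S : Set A) (L : A →ₗ[ℝ] ℝ) : Prop :=
  ∀ (a : A) (c : ℝ), IsPositiveOn S (L ∘ₗ .mulLeft ℝ (algebraMap ℝ A c - a ^ 2)) →
    ∃ r, a - algebraMap ℝ A r ∈ nullIdeal L

end NullIdeal

/-! ### Reduction to extreme functionals -/

open scoped NNReal ENNReal

section KreinMilman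

variable {A : Type*} [CommRing A] [Algebra ℝ A] {S : Set A} {ι : Type*}

/-- The sum of the values of `g` at the elements `1 + s i ^ 2`, with weights `c i`. On positive
functionals it is additive and controls the values at all elements of the span of `s`. -/
noncomputable def weightedMass (c : ι → ℝ≥0) (s : ι → A) (g : A → ℝ) : ℝ≥0∞ :=
  ∑' i, ENNReal.ofReal (g (1 + s i ^ 2)) * c i

/-- The positive functionals of weighted mass at most one, as functions on `A`, so that they carry
the topology of pointwise convergence. -/
def positiveFunctionals (S : Set A) (c : ι → ℝ≥0) (s : ι → A) : Set (A → ℝ) :=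
  {g | (∃ L : A →ₗ[ℝ] ℝ, IsPositiveOn S L ∧ ⇑L = g) ∧ weightedMass c s g ≤ 1}

variable {c : ι → ℝ≥0} {s : ι → A}

theorem IsPositiveOn.weightedMass_add {L₁ L₂ : A →ₗ[ℝ] ℝ} (h₁ : IsPositiveOn S L₁)
    (h₂ : IsPositiveOn S L₂) :
    weightedMass c s (L₁ + L₂) = weightedMass c s L₁ + weightedMass c s L₂ := by
  have hpos (i : ι) : IsInPreordering S (1 + s i ^ 2) := .add .one (.sq _)
  simp only [weightedMass, ← ENNReal.tsum_add, ← add_mul]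
  congr! 3 with i
  exact ENNReal.ofReal_add (h₁ _ (hpos i)) (h₂ _ (hpos i))

omit [Algebra ℝ A] in
theorem weightedMass_smul {r : ℝ} (hr : 0 ≤ r) (g : A → ℝ) :
    weightedMass c s (r • g) = ENNReal.ofReal r * weightedMass c s g := by
  simp [weightedMass, ENNReal.ofReal_mul hr, mul_assoc, ENNReal.tsum_mul_left]

theorem IsPositiveOn.enorm_apply_le_weightedMass (hc : ∀ i, 0 < c i) {L : A →ₗ[ℝ] ℝ}
    (hL : IsPositiveOn S L) (i : ι) : ‖L (s i)‖ₑ ≤ ↑(c i)⁻¹ * weightedMass c s L := by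
  have hci : (c i : ℝ≥0∞) ≠ 0 := by exact_mod_cast (hc i).ne'
  rw [ENNReal.coe_inv (hc i).ne', mul_comm, ← ENNReal.div_eq_inv_mul.trans (mul_comm _ _),
    ENNReal.le_div_iff_mul_le (.inl hci) (.inl ENNReal.coe_ne_top)]
  refine le_trans ?_ (ENNReal.le_tsum i)
  gcongr
  rw [Real.enorm_eq_ofReal_abs]
  exact ENNReal.ofReal_le_ofReal (hL.abs_apply_le _)

theorem exists_enorm_apply_le_weightedMass (hc : ∀ i, 0 < c i)
    (hs : Submodule.span ℝ (Set.range s) = ⊤) (a : A) :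
    ∃ C : ℝ≥0, ∀ L, IsPositiveOn S L → ‖L a‖ₑ ≤ C * weightedMass c s L := by
  induction (hs ▸ Submodule.mem_top : a ∈ Submodule.span ℝ (Set.range s))
    using Submodule.span_induction with
  | mem _ h =>
    obtain ⟨i, rfl⟩ := h
    exact ⟨(c i)⁻¹, fun L hL => hL.enorm_apply_le_weightedMass hc i⟩
  | zero => exact ⟨0, by simp⟩
  | add a b _ _ ha hb =>
    obtain ⟨C, hC⟩ := ha
    obtain ⟨D, hD⟩ := hb
    refine ⟨C + D, fun L hL => ?_⟩
    rw [map_add, ENNReal.coe_add, add_mul]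
    exact (enorm_add_le _ _).trans (add_le_add (hC L hL) (hD L hL))
  | smul r a _ ha =>
    obtain ⟨C, hC⟩ := ha
    refine ⟨‖r‖₊ * C, fun L hL => ?_⟩
    rw [map_smul, enorm_smul, ENNReal.coe_mul, mul_assoc]
    exact mul_le_mul_right (hC L hL) _

theorem IsPositiveOn.eq_zero_of_weightedMass_eq_zero (hc : ∀ i, 0 < c i)
    (hs : Submodule.span ℝ (Set.range s) = ⊤) {L : A →ₗ[ℝ] ℝ} (hL : IsPositiveOn S L)
    (h0 : weightedMass c s L = 0) : L = 0 := by
  ext a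
  obtain ⟨C, hC⟩ := exists_enorm_apply_le_weightedMass hc hs a
  simpa [h0] using hC L hL

theorem isClosed_positiveFunctionals : IsClosed (positiveFunctionals S c s) := by
  have hmass : LowerSemicontinuous (weightedMass c s : (A → ℝ) → ℝ≥0∞) :=
    lowerSemicontinuous_tsum fun i => Continuous.lowerSemicontinuous <|
      ENNReal.continuous_mul_const ENNReal.coe_ne_top |>.comp <|
        ENNReal.continuous_ofReal.comp (continuous_apply _)
  have hpos : IsClosed {g : A → ℝ | ∀ a, IsInPreordering S a → 0 ≤ g a} := by
    simp only [Set.ofPred_forall]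
    exact isClosed_iInter fun a => isClosed_iInter fun _ =>
      isClosed_le continuous_const (continuous_apply a)
  convert ((LinearMap.isClosed_range_coe A ℝ (RingHom.id ℝ)).inter hpos).inter
    (hmass.isClosed_preimage 1) using 1
  ext g
  constructor
  · rintro ⟨⟨L, hL, rfl⟩, hg⟩
    exact ⟨⟨⟨L, rfl⟩, hL⟩, hg⟩
  · rintro ⟨⟨⟨L, rfl⟩, hL⟩, hg⟩
    exact ⟨⟨L, hL, rfl⟩, hg⟩

theorem isCompact_positiveFunctionals (hc : ∀ i, 0 < c i)
    (hs : Submodule.span ℝ (Set.range s) = ⊤) : IsCompact (positiveFunctionals S c s) := by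
  choose C hC using exists_enorm_apply_le_weightedMass (S := S) hc hs
  refine (isCompact_univ_pi fun a => isCompact_closedBall (0 : ℝ) (C a)).of_isClosed_subset
    isClosed_positiveFunctionals ?_
  rintro _ ⟨⟨L, hL, rfl⟩, hg⟩ a -
  have hle : ‖L a‖ₑ ≤ C a := (hC a L hL).trans (mul_le_of_le_one_right' hg)
  rw [mem_closedBall_zero_iff, ← coe_nnnorm]
  exact_mod_cast hle

theorem convex_positiveFunctionals : Convex ℝ (positiveFunctionals S c s) := by
  rintro _ ⟨⟨L₁, h₁, rfl⟩, hm₁⟩ _ ⟨⟨L₂, h₂, rfl⟩, hm₂⟩ a b ha hb hab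
  have ha₁ : IsPositiveOn S (a • L₁) := fun x hx => mul_nonneg ha (h₁ x hx)
  have hb₂ : IsPositiveOn S (b • L₂) := fun x hx => mul_nonneg hb (h₂ x hx)
  refine ⟨⟨a • L₁ + b • L₂, fun x hx => add_nonneg (ha₁ x hx) (hb₂ x hx), rfl⟩, ?_⟩
  calc weightedMass c s (a • L₁ + b • L₂)
      = ENNReal.ofReal a * weightedMass c s L₁ + ENNReal.ofReal b * weightedMass c s L₂ := by
        rw [← weightedMass_smul ha, ← weightedMass_smul hb]
        exact ha₁.weightedMass_add hb₂
    _ ≤ ENNReal.ofReal a * 1 + ENNReal.ofReal b * 1 := by gcongr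
    _ = 1 := by rw [mul_one, mul_one, ← ENNReal.ofReal_add ha hb, hab, ENNReal.ofReal_one]

theorem IsPositiveOn.inv_smul_mem_positiveFunctionals {L : A →ₗ[ℝ] ℝ} (hL : IsPositiveOn S L)
    {r : ℝ} (hr : 0 < r) (hmass : weightedMass c s L ≤ ENNReal.ofReal r) :
    ⇑(r⁻¹ • L) ∈ positiveFunctionals S c s := by
  refine ⟨⟨_, fun a ha => mul_nonneg (inv_nonneg.2 hr.le) (hL a ha), rfl⟩, ?_⟩
  rw [LinearMap.coe_smul, weightedMass_smul (inv_nonneg.2 hr.le), ENNReal.ofReal_inv_of_pos hr]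
  exact (mul_le_mul_right hmass _).trans (ENNReal.inv_mul_le_one _)

theorem exists_eq_smul_of_mem_extremePoints (hc : ∀ i, 0 < c i)
    (hs : Submodule.span ℝ (Set.range s) = ⊤) {L₁ L₂ : A →ₗ[ℝ] ℝ}
    (hext : ⇑(L₁ + L₂) ∈ (positiveFunctionals S c s).extremePoints ℝ) (h₁ : IsPositiveOn S L₁)
    (h₂ : IsPositiveOn S L₂) : ∃ r : ℝ, L₁ = r • (L₁ + L₂) := by
  have hle : weightedMass c s L₁ + weightedMass c s L₂ ≤ 1 :=
    (h₁.weightedMass_add h₂).symm.trans_le hext.1.2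
  obtain ⟨t, ht⟩ : ∃ t : ℝ≥0, (t : ℝ≥0∞) = weightedMass c s L₁ :=
    ⟨_, ENNReal.coe_toNNReal ((le_self_add.trans hle).trans_lt ENNReal.one_lt_top).ne⟩
  obtain ⟨t', ht'⟩ : ∃ t' : ℝ≥0, (t' : ℝ≥0∞) = weightedMass c s L₂ :=
    ⟨_, ENNReal.coe_toNNReal ((le_add_self.trans hle).trans_lt ENNReal.one_lt_top).ne⟩
  obtain rfl | ht0 := eq_or_ne t 0
  · exact ⟨0, by simp [h₁.eq_zero_of_weightedMass_eq_zero hc hs ht.symm]⟩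
  obtain rfl | ht0' := eq_or_ne t' 0
  · exact ⟨1, by simp [h₂.eq_zero_of_weightedMass_eq_zero hc hs ht'.symm]⟩
  rw [← ht, ← ht'] at hle
  have hsum : (t : ℝ) + t' ≤ 1 := by exact_mod_cast hle
  have htpos : 0 < (t : ℝ) := by exact_mod_cast ht0.bot_lt
  have htpos' : 0 < (t' : ℝ) := by exact_mod_cast ht0'.bot_lt
  have hmem₁ := h₁.inv_smul_mem_positiveFunctionals (c := c) (s := s) htpos (by simp [← ht])
  have hmem₂ := h₂.inv_smul_mem_positiveFunctionals (c := c) (s := s) (r := 1 - t)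
    (by linarith) (by rw [← ht', ← ENNReal.ofReal_coe_nnreal]; gcongr; linarith)
  have heq : (t : ℝ)⁻¹ • L₁ = L₁ + L₂ := DFunLike.coe_injective <|
    hext.2 hmem₁ hmem₂ ⟨t, 1 - t, htpos, by linarith, by ring, by
      ext a
      have : (1 : ℝ) - t ≠ 0 := by linarith
      simp [ht0, this]⟩
  exact ⟨t, by rw [← heq, smul_inv_smul₀ htpos.ne']⟩

theorem IsPositiveOn.comp_mulLeft_sq_sub_sq {L : A →ₗ[ℝ] ℝ} (hL : IsPositiveOn S L) {a : A}
    {b r : ℝ} (hr : r ≤ b ^ 2) (ha : IsPositiveOn S (L ∘ₗ .mulLeft ℝ (algebraMap ℝ A r - a ^ 2))) :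
    IsPositiveOn S (L ∘ₗ .mulLeft ℝ (algebraMap ℝ A (b ^ 2) - a ^ 2)) := fun x hx => by
  have h := ha x hx
  have h' := mul_le_mul_of_nonneg_right hr (hL x hx)
  simp only [LinearMap.comp_apply, LinearMap.mulLeft_apply, sub_mul, ← Algebra.smul_def, map_sub,
    map_smul, smul_eq_mul] at h ⊢
  linarith

theorem boundedActAsScalars_of_mem_extremePoints (hc : ∀ i, 0 < c i)
    (hs : Submodule.span ℝ (Set.range s) = ⊤) {L : A →ₗ[ℝ] ℝ} (hL : IsPositiveOn S L)
    (hext : ⇑L ∈ (positiveFunctionals S c s).extremePoints ℝ) : BoundedActAsScalars S L := by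
  intro a r ha
  set b : ℝ := |r| + 1
  have hb : 0 < b := by positivity
  have hr : r ≤ b ^ 2 := by nlinarith [le_abs_self r, abs_nonneg r]
  have ha' := hL.comp_mulLeft_sq_sub_sq hr ha
  have hadd : L = (2 * b)⁻¹ • (L ∘ₗ .mulLeft ℝ (algebraMap ℝ A b + a)) +
      (2 * b)⁻¹ • (L ∘ₗ .mulLeft ℝ (algebraMap ℝ A b + -a)) := by
    ext x
    simp only [LinearMap.add_apply, LinearMap.smul_apply, LinearMap.comp_apply,
      LinearMap.mulLeft_apply, add_mul, ← Algebra.smul_def, neg_mul, map_add, map_neg, map_smul,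
      smul_eq_mul]
    field
  have hpos {a : A} (ha : IsPositiveOn S (L ∘ₗ .mulLeft ℝ (algebraMap ℝ A (b ^ 2) - a ^ 2))) :
      IsPositiveOn S ((2 * b)⁻¹ • (L ∘ₗ .mulLeft ℝ (algebraMap ℝ A b + a))) :=
    fun x hx => mul_nonneg (by positivity) (hL.comp_mulLeft_add hb ha x hx)
  obtain ⟨ρ, hρ⟩ := exists_eq_smul_of_mem_extremePoints hc hs (hadd ▸ hext) (hpos ha')
    (hpos (by rwa [neg_sq]))
  refine ⟨2 * b * ρ - b, sub_algebraMap_mem_nullIdeal.2 (LinearMap.ext fun x => ?_)⟩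
  have := LinearMap.congr_fun (hρ.trans (congrArg (ρ • ·) hadd.symm)) x
  simp only [LinearMap.smul_apply, LinearMap.comp_apply, LinearMap.mulLeft_apply, add_mul,
    ← Algebra.smul_def, map_add, map_smul, smul_eq_mul] at this ⊢
  field_simp at this
  linarith

theorem IsPositiveOn.apply_nonneg_of_boundedActAsScalars [Countable ι]
    (hs : Submodule.span ℝ (Set.range s) = ⊤) {p : A}
    (hp : ∀ L, IsPositiveOn S L → BoundedActAsScalars S L → 0 ≤ L p) {L : A →ₗ[ℝ] ℝ}
    (hL : IsPositiveOn S L) : 0 ≤ L p := by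
  obtain ⟨c, hc, hmass⟩ := ENNReal.exists_pos_tsum_mul_lt_of_countable one_ne_zero
    (fun i => ENNReal.ofReal (L (1 + s i ^ 2))) fun _ => ENNReal.ofReal_ne_top
  have hmem : ⇑L ∈ positiveFunctionals S c s := ⟨⟨L, hL, rfl⟩, hmass.le⟩
  rw [← closure_convexHull_extremePoints (isCompact_positiveFunctionals hc hs)
    convex_positiveFunctionals] at hmem
  have hclosed : IsClosed {g : A → ℝ | 0 ≤ g p} :=
    isClosed_le continuous_const (continuous_apply p)
  refine closure_minimal (convexHull_min ?_ ?_) hclosed hmem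
  · intro g hg
    obtain ⟨⟨M, hM, rfl⟩, -⟩ := hg.1
    exact hp M hM (boundedActAsScalars_of_mem_extremePoints hc hs hM hg)
  · exact convex_halfSpace_ge (LinearMap.proj (R := ℝ) (φ := fun _ : A => ℝ) p).isLinear 0

end KreinMilman

theorem exists_span_range_eq_top (A : Type*) [CommRing A] [Algebra ℝ A]
    [Algebra.FiniteType ℝ A] :
    ∃ (n : ℕ) (s : (Fin n →₀ ℕ) → A), Submodule.span ℝ (Set.range s) = ⊤ := by
  obtain ⟨n, φ, hφ⟩ := Algebra.FiniteType.iff_quotient_mvPolynomial''.1 ‹Algebra.FiniteType ℝ A›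
  refine ⟨n, φ ∘ MvPolynomial.basisMonomials (Fin n) ℝ, ?_⟩
  rw [Set.range_comp, ← AlgHom.coe_toLinearMap, ← Submodule.map_span, Module.Basis.span_eq,
    Submodule.map_top, LinearMap.range_eq_top.2 hφ]

/-! ### Functionals concentrated on a fibre -/

open scoped TensorProduct

theorem exists_forall_eval_sub_sq_add_nonneg {g : ℝ[X]} (hg : g ≠ 0) :
    ∃ c : ℝ, ∀ t, 0 ≤ (C c - X ^ 2 + (X * (X * g)) ^ 2).eval t := by
  have hdeg : 0 < (X * g).degree := by
    rw [degree_mul, degree_X]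
    exact add_pos_of_pos_of_nonneg one_pos (zero_le_degree_iff.2 hg)
  obtain ⟨r, hr⟩ := eventually_atTop.1 <| eventually_comap.1 <|
    ((X * g).tendsto_norm_atTop hdeg tendsto_comap).eventually_ge_atTop 1
  refine ⟨r ^ 2, fun t => ?_⟩
  simp only [eval_add, eval_sub, eval_pow, eval_mul, eval_C, eval_X]
  obtain ht | ht := le_total r |t|
  · have hone : 1 ≤ (t * g.eval t) ^ 2 := by
      simpa using hr |t| ht t rfl
    nlinarith [sq_nonneg r, sq_nonneg t]
  · have : t ^ 2 ≤ r ^ 2 := sq_le_sq.2 (ht.trans (le_abs_self r))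
    linarith [sq_nonneg (t * (t * g.eval t))]

theorem surjective_comp_includeLeft {R E D B : Type*} [CommRing R] [CommRing E] [CommRing D]
    [CommRing B] [Algebra R E] [Algebra R D] [Algebra R B] {φ : E ⊗[R] D →ₐ[R] B}
    (hφ : Function.Surjective φ)
    (hD : ∀ x, φ.comp Algebra.TensorProduct.includeRight x ∈ (⊥ : Subalgebra R B)) :
    Function.Surjective (φ.comp (Algebra.TensorProduct.includeLeft : E →ₐ[R] E ⊗[R] D)) := by
  have hprod : φ = Algebra.TensorProduct.productMap
      (φ.comp Algebra.TensorProduct.includeLeft) (φ.comp Algebra.TensorProduct.includeRight) := by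
    ext x <;> simp [← Algebra.TensorProduct.one_def]
  have hbot : (φ.comp (Algebra.TensorProduct.includeRight : D →ₐ[R] E ⊗[R] D)).range = ⊥ := by
    rw [eq_bot_iff]
    rintro _ ⟨x, rfl⟩
    exact hD x
  rw [← AlgHom.range_eq_top] at hφ ⊢
  rw [hprod, Algebra.TensorProduct.productMap_range, hbot, sup_bot_eq] at hφ
  exact hφ

theorem surjective_algebraMap_of_localization {ℰ : Submonoid ℝ[X]} {B : Type*} [CommRing B]
    [Algebra ℝ B] {σ : Localization ℰ →ₐ[ℝ] B} (hσ : Function.Surjective σ)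
    (hX : σ (algebraMap ℝ[X] _ X) ∈ (⊥ : Subalgebra ℝ B)) :
    Function.Surjective (algebraMap ℝ B) := by
  obtain ⟨r, hr⟩ := Algebra.mem_bot.1 hX
  have heval (q : ℝ[X]) : σ (algebraMap ℝ[X] _ q) = algebraMap ℝ B (q.eval r) := by
    rw [← aeval_X_left_apply q, ← aeval_algebraMap_apply, ← aeval_algHom_apply, ← hr,
      aeval_algebraMap_apply, aeval_X_left_apply, coe_aeval_eq_eval]
  intro b
  obtain ⟨e, rfl⟩ := hσ b
  obtain ⟨⟨p, w⟩, hpw⟩ := IsLocalization.surj ℰ e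
  have hw : IsUnit (algebraMap ℝ B ((w : ℝ[X]).eval r)) := by
    rw [← heval]
    exact (IsLocalization.map_units (Localization ℰ) w).map σ
  have hpw' := congrArg σ hpw
  rw [map_mul, heval, heval] at hpw'
  obtain hw0 | hw0 := eq_or_ne ((w : ℝ[X]).eval r) 0
  · rw [hw0, map_zero, isUnit_zero_iff] at hw
    have := subsingleton_of_zero_eq_one hw
    exact ⟨0, Subsingleton.elim _ _⟩
  · refine ⟨p.eval r / (w : ℝ[X]).eval r, hw.mul_right_cancel ?_⟩
    rw [hpw', ← map_mul, div_mul_cancel₀ _ hw0]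

section Fibre

variable {A : Type*} [CommRing A] [Algebra ℝ A] {S : Set A} {L : A →ₗ[ℝ] ℝ}

theorem IsPositiveOn.mem_bot_of_isAlgebraic (hL : IsPositiveOn S L)
    (hbdd : BoundedActAsScalars S L) {x : A ⧸ nullIdeal L} (hx : IsAlgebraic ℝ x) :
    x ∈ (⊥ : Subalgebra ℝ (A ⧸ nullIdeal L)) := by
  obtain ⟨a, rfl⟩ := Ideal.Quotient.mkₐ_surjective ℝ (nullIdeal L) x
  obtain ⟨g, hg, hga⟩ := hx
  rw [aeval_algHom_apply, Ideal.Quotient.mkₐ_eq_mk, Ideal.Quotient.eq_zero_iff_mem] at hga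
  obtain ⟨c, hc⟩ := exists_forall_eval_sub_sq_add_nonneg hg
  obtain ⟨r, hr⟩ := hbdd a c fun b hb => by
    have hpos := hL _ (.mul (isInPreordering_aeval hc a) hb)
    have heq : aeval a (C c - X ^ 2 + (X * (X * g)) ^ 2) * b =
        (algebraMap ℝ A c - a ^ 2) * b + aeval a g * (a ^ 4 * aeval a g * b) := by
      simp only [map_add, map_sub, map_mul, map_pow, aeval_X, aeval_C]
      ring
    rwa [heq, map_add, hga, add_zero] at hpos
  exact Algebra.mem_bot.2 ⟨r, (Ideal.Quotient.eq.2 hr).symm⟩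

theorem IsPositiveOn.apply_nonneg_of_isInPreordering_mk (hL : IsPositiveOn S L) {p : A}
    (hp : IsInPreordering ∅ (Ideal.Quotient.mk (nullIdeal L) p)) : 0 ≤ L p := by
  obtain ⟨a, ha, hap⟩ := IsInPreordering.exists_eq_of_map (S := ∅)
    (Ideal.Quotient.mk_surjective (I := nullIdeal L)) (by rwa [Set.image_empty])
  have := apply_eq_zero_of_mem_nullIdeal (Ideal.Quotient.eq.1 hap)
  rw [map_sub, sub_eq_zero] at this
  exact this ▸ hL a (ha.mono (Set.empty_subset S))

theorem IsPositiveOn.apply_nonneg_of_surjective_algebraMap (hL : IsPositiveOn S L)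
    (hsurj : Function.Surjective (algebraMap ℝ (A ⧸ nullIdeal L))) {p : A}
    (hp : ∀ χ : A →ₐ[ℝ] ℝ, 0 ≤ χ p) : 0 ≤ L p := by
  obtain hsub | hnon := subsingleton_or_nontrivial (A ⧸ nullIdeal L)
  · exact (apply_eq_zero_of_mem_nullIdeal <|
      Ideal.Quotient.eq_zero_iff_mem.1 (Subsingleton.elim _ _)).ge
  let e : ℝ ≃ₐ[ℝ] A ⧸ nullIdeal L :=
    .ofBijective (Algebra.ofId ℝ _) ⟨(algebraMap ℝ (A ⧸ nullIdeal L)).injective, hsurj⟩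
  let χ : A →ₐ[ℝ] ℝ := e.symm.toAlgHom.comp (Ideal.Quotient.mkₐ ℝ (nullIdeal L))
  obtain ⟨r, hr⟩ := hsurj (Ideal.Quotient.mk _ p)
  have hχ : χ p = r := by
    rw [← e.symm_apply_apply r]
    exact congrArg e.symm hr.symm
  have hLp : L p = r * L 1 := by
    simpa using LinearMap.congr_fun
      (sub_algebraMap_mem_nullIdeal.1 (Ideal.Quotient.eq.1 hr.symm)) 1
  rw [hLp]
  exact mul_nonneg (hχ ▸ hp χ) (hL 1 .one)

theorem IsPositiveOn.apply_nonneg_of_bijective_localization (hL : IsPositiveOn S L)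
    {ℰ : Submonoid ℝ[X]} (hℰ0 : 0 ∉ ℰ) (hℰ : ℰ.FG) (e : Localization ℰ ≃ₐ[ℝ] A ⧸ nullIdeal L)
    {p : A} (hp : ∀ χ : A →ₐ[ℝ] ℝ, 0 ≤ χ p) : 0 ≤ L p := by
  have he := isInPreordering_localization_of_forall_algHom_nonneg hℰ0 hℰ (S := ∅)
    (e := e.symm (Ideal.Quotient.mk _ p)) fun χ =>
      hp ((χ.comp e.symm.toAlgHom).comp (Ideal.Quotient.mkₐ ℝ (nullIdeal L)))
  apply hL.apply_nonneg_of_isInPreordering_mk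
  simpa using he.map e.toRingHom

theorem isAlgebraic_apply_of_not_injective {ℰ : Submonoid ℝ[X]} {B : Type*} [CommRing B]
    [Algebra ℝ B] {σ : Localization ℰ →ₐ[ℝ] B} (hσ : ¬ Function.Injective σ) :
    IsAlgebraic ℝ (σ (algebraMap ℝ[X] _ X)) := by
  rw [injective_iff_map_eq_zero] at hσ
  push Not at hσ
  obtain ⟨e, he, he0⟩ := hσ
  obtain ⟨⟨p, w⟩, hpw⟩ := IsLocalization.surj ℰ e
  refine ⟨p, ?_, ?_⟩
  · rintro rfl
    rw [map_zero] at hpw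
    exact he0 ((IsLocalization.map_units (Localization ℰ) w).mul_left_eq_zero.1 hpw)
  · rw [aeval_algHom_apply, aeval_algebraMap_apply, aeval_X_left_apply, ← hpw, map_mul, he,
      zero_mul]

/-- `B` is a quotient of the coordinate ring `ℰ⁻¹ℝ[y] ⊗ C` of a localized affine line thickened by
a finite-dimensional algebra `C`. -/
def IsQuotientOfThickLine (B : Type*) [CommRing B] [Algebra ℝ B] : Prop :=
  ∃ ℰ : Submonoid ℝ[X], 0 ∉ ℰ ∧ ℰ.FG ∧
    ∃ (Cb : FinCommAlg) (ρ : Localization ℰ ⊗[ℝ] Cb.carrier →ₐ[ℝ] B), Function.Surjective ρ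

theorem IsQuotientOfThickLine.of_surjective {B B' : Type*} [CommRing B] [Algebra ℝ B]
    [CommRing B'] [Algebra ℝ B'] (hB : IsQuotientOfThickLine B) {φ : B →ₐ[ℝ] B'}
    (hφ : Function.Surjective φ) : IsQuotientOfThickLine B' := by
  obtain ⟨ℰ, hℰ0, hℰ, Cb, ρ, hρ⟩ := hB
  exact ⟨ℰ, hℰ0, hℰ, Cb, φ.comp ρ, hφ.comp hρ⟩

theorem IsPositiveOn.apply_nonneg_of_isQuotientOfThickLine (hL : IsPositiveOn S L)
    (hbdd : BoundedActAsScalars S L) (hquot : IsQuotientOfThickLine (A ⧸ nullIdeal L)) {p : A}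
    (hp : ∀ χ : A →ₐ[ℝ] ℝ, 0 ≤ χ p) : 0 ≤ L p := by
  obtain ⟨ℰ, hℰ0, hℰ, Cb, ρ, hρ⟩ := hquot
  have := Cb.findim
  let σ := ρ.comp (Algebra.TensorProduct.includeLeft : Localization ℰ →ₐ[ℝ] _)
  have hσ : Function.Surjective σ := surjective_comp_includeLeft hρ fun x =>
    hL.mem_bot_of_isAlgebraic hbdd ((Algebra.IsAlgebraic.isAlgebraic x).algHom _)
  by_cases hinj : Function.Injective σ
  · exact hL.apply_nonneg_of_bijective_localization hℰ0 hℰ (.ofBijective σ ⟨hinj, hσ⟩) hp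
  · exact hL.apply_nonneg_of_surjective_algebraMap (surjective_algebraMap_of_localization hσ <|
      hL.mem_bot_of_isAlgebraic hbdd (isAlgebraic_apply_of_not_injective hinj)) hp

theorem exists_neg_one_eq_add_mul [Algebra.FiniteType ℝ A] (hS : S.Finite) {b : A}
    (hb : ∀ χ : A →ₐ[ℝ] ℝ, (∀ s ∈ S, 0 ≤ χ s) → χ b < 0) :
    ∃ p q, IsInPreordering S p ∧ IsInPreordering S q ∧ -1 = p + b * q := by
  obtain ⟨p, q, hp, hq, heq⟩ := IsInPreordering.exists_eq_add_mul_of_insert <|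
    isInPreordering_neg_one (hS.insert b) fun χ => by
      by_cases hχ : ∀ s ∈ S, 0 ≤ χ s
      · exact ⟨b, Set.mem_insert b S, hb χ hχ⟩
      · push Not at hχ
        obtain ⟨s, hs, hlt⟩ := hχ
        exact ⟨s, Set.mem_insert_of_mem b hs, hlt⟩
  exact ⟨p, q, hp, hq, heq⟩

theorem IsPositiveOn.comp_mulLeft_sub_sq_of_forall_abs_le [Algebra.FiniteType ℝ A]
    (hL : IsPositiveOn S L) (hS : S.Finite) {a : A} {C : ℝ}
    (ha : ∀ χ : A →ₐ[ℝ] ℝ, (∀ s ∈ S, 0 ≤ χ s) → |χ a| ≤ C) :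
    IsPositiveOn S (L ∘ₗ .mulLeft ℝ (algebraMap ℝ A (C ^ 2 + 1) - a ^ 2)) := by
  obtain ⟨p, q, hp, hq, heq⟩ :=
    exists_neg_one_eq_add_mul hS (b := a ^ 2 - algebraMap ℝ A (C ^ 2 + 1)) fun χ hχ => by
      have : χ a ^ 2 ≤ C ^ 2 := sq_le_sq.2 ((ha χ hχ).trans (le_abs_self C))
      rw [map_sub, map_pow, AlgHom.commutes, Algebra.algebraMap_self_apply]
      linarith
  exact hL.comp_mulLeft_sub_sq_of_mul_eq (by positivity) hq hp (by linear_combination heq)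

theorem IsPositiveOn.exists_algHom_of_mem_nullIdeal [Algebra.FiniteType ℝ A]
    (hL : IsPositiveOn S L) (hS : S.Finite) (hL0 : L ≠ 0) {ι : Type*} [Finite ι] {a : ι → A}
    (ha : ∀ i, a i ∈ nullIdeal L) :
    ∃ χ : A →ₐ[ℝ] ℝ, (∀ s ∈ S, 0 ≤ χ s) ∧ ∀ i, χ (a i) = 0 := by
  have := Fintype.ofFinite ι
  by_contra! hχ
  obtain ⟨p, q, hp, -, heq⟩ :=
    exists_neg_one_eq_add_mul hS (b := -∑ i, a i ^ 2) fun χ hχS => by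
      obtain ⟨i, hi⟩ := hχ χ hχS
      simp only [map_neg, map_sum, map_pow, neg_lt_zero]
      exact Finset.sum_pos' (fun j _ => sq_nonneg _) ⟨i, Finset.mem_univ i, by positivity⟩
  have hmem : ∑ i, a i ^ 2 ∈ nullIdeal L :=
    Ideal.sum_mem _ fun i _ => Ideal.pow_mem_of_mem _ (ha i) 2 two_pos
  have hp1 : L p = -L 1 := by
    rw [← map_neg, heq, map_add, neg_mul, map_neg, hmem q, neg_zero, add_zero]
  exact hL0 (hL.eq_zero_of_apply_one_eq_zero <|
    le_antisymm (by linarith [hL p hp]) (hL 1 .one))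

theorem IsPositiveOn.apply_nonneg_of_forall_algHom [Algebra.FiniteType ℝ A] (hS : S.Finite)
    {ι : Type*} [Finite ι] {h : ι → A} {C : ℝ}
    (hbd : ∀ χ : A →ₐ[ℝ] ℝ, (∀ s ∈ S, 0 ≤ χ s) → ∀ i, |χ (h i)| ≤ C)
    (hfib : ∀ χ : A →ₐ[ℝ] ℝ, (∀ s ∈ S, 0 ≤ χ s) → IsQuotientOfThickLine
      (A ⧸ Ideal.span (Set.range fun i => h i - algebraMap ℝ A (χ (h i)))))
    (hL : IsPositiveOn S L) {p : A} (hp : ∀ χ : A →ₐ[ℝ] ℝ, 0 ≤ χ p) : 0 ≤ L p := by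
  obtain ⟨n, s, hs⟩ := exists_span_range_eq_top A
  refine IsPositiveOn.apply_nonneg_of_boundedActAsScalars hs (fun L hL hbdd => ?_) hL
  obtain rfl | hL0 := eq_or_ne L 0
  · rfl
  choose r hr using fun i => hbdd (h i) (C ^ 2 + 1) <|
    hL.comp_mulLeft_sub_sq_of_forall_abs_le hS fun χ hχ => hbd χ hχ i
  obtain ⟨χ, hχS, hχ⟩ := hL.exists_algHom_of_mem_nullIdeal hS hL0 hr
  have hle : Ideal.span (Set.range fun i => h i - algebraMap ℝ A (χ (h i))) ≤ nullIdeal L := by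
    have hχr (i : ι) : χ (h i) = r i := by simpa [sub_eq_zero] using hχ i
    simp only [hχr]
    exact Ideal.span_le.2 (Set.range_subset_iff.2 hr)
  exact hL.apply_nonneg_of_isQuotientOfThickLine hbdd
    ((hfib χ hχS).of_surjective (φ := Ideal.Quotient.factorₐ ℝ hle)
      (Ideal.Quotient.factor_surjective hle)) hp

end Fibre

/-! ### Representing measures -/

open MeasureTheory
open scoped CompactlySupported

theorem exists_linearMap_apply_le_of_le {V W E : Type*} [AddCommGroup V] [Module ℝ V]
    [AddCommGroup W] [Module ℝ W] [AddCommGroup E] [PartialOrder E] [IsOrderedAddMonoid E]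
    [Module ℝ E] [PosSMulMono ℝ E] {u : V →ₗ[ℝ] E} {w : W →ₗ[ℝ] E} {L : V →ₗ[ℝ] ℝ}
    (hL : ∀ a, 0 ≤ u a → 0 ≤ L a) (hcof : ∀ b, ∃ a, w b ≤ u a) :
    ∃ Λ : W →ₗ[ℝ] ℝ, ∀ a b, w b ≤ u a → Λ b ≤ L a := by
  obtain ⟨g, hgL, hg⟩ := riesz_extension ((PointedCone.positive ℝ E).comap (u.coprod w))
    ⟨LinearMap.range (LinearMap.inl ℝ V W), (L ∘ₗ LinearMap.fst ℝ V W) ∘ₗ Submodule.subtype _⟩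
    (by
      rintro ⟨_, a, rfl⟩ ha
      exact hL a (by simpa using ha))
    (fun ⟨a, b⟩ => by
      obtain ⟨c, hc⟩ := hcof (-b)
      exact ⟨⟨_, c - a, rfl⟩, by simpa [neg_le_iff_add_nonneg] using hc⟩)
  refine ⟨g ∘ₗ LinearMap.inr ℝ V W, fun a b hab => ?_⟩
  have hgab : 0 ≤ g (a, -b) := hg _ (by simpa [← sub_eq_add_neg] using hab)
  have hga : g (a, 0) = L a := hgL ⟨_, a, rfl⟩
  have hsplit : g (a, -b) = g (a, 0) - g (0, b) := by
    rw [← map_sub]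
    simp
  rw [LinearMap.comp_apply, LinearMap.inr_apply]
  linarith

section RepresentingMeasure

variable {X : Type*} [TopologicalSpace X]

theorem exists_compactlySupported_le_and_eqOn [T2Space X] [LocallyCompactSpace X] {f : C(X, ℝ)}
    (hf : 0 ≤ f) {K : Set X} (hK : IsCompact K) :
    ∃ ψ : C_c(X, ℝ), (∀ x, 0 ≤ ψ x) ∧ (∀ x, ψ x ≤ f x) ∧ Set.EqOn ψ f K := by
  obtain ⟨χ, hχ1, -, hχsupp, hχ⟩ :=
    exists_continuous_one_zero_of_isCompact hK isClosed_empty (Set.disjoint_empty K)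
  exact ⟨⟨χ * f, hχsupp.mul_right⟩, fun x => mul_nonneg (hχ x).1 (hf x),
    fun x => mul_le_of_le_one_left (hf x) (hχ x).2, fun x hx => by simp [hχ1 hx]⟩

variable {A : Type*} [CommRing A] [Algebra ℝ A] {ev : A →ₐ[ℝ] C(X, ℝ)} {L : A →ₗ[ℝ] ℝ}

theorem exists_positiveLinearMap_apply_le (hL : ∀ a, 0 ≤ ev a → 0 ≤ L a) :
    ∃ Λ : C_c(X, ℝ) →ₚ[ℝ] ℝ, ∀ a (φ : C_c(X, ℝ)), (∀ x, φ x ≤ ev a x) → Λ φ ≤ L a := by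
  let ι : C_c(X, ℝ) →ₗ[ℝ] C(X, ℝ) :=
    { toFun := (↑), map_add' := fun _ _ => rfl, map_smul' := fun _ _ => rfl }
  obtain ⟨Λ, hΛ⟩ := exists_linearMap_apply_le_of_le (u := ev.toLinearMap) (w := ι) hL fun φ => by
    obtain ⟨C, hC⟩ := φ.hasCompactSupport.exists_bound_of_continuous φ.continuous
    refine ⟨algebraMap ℝ A C, fun x => ?_⟩
    simpa [ι] using (le_abs_self (φ x)).trans (hC x)
  refine ⟨.mk₀ Λ fun φ hφ => ?_, hΛ⟩
  have := hΛ 0 (-φ) fun x => by simpa [ι] using hφ x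
  simpa using this

variable [T2Space X] [LocallyCompactSpace X] [MeasurableSpace X] [BorelSpace X] {μ : Measure X}

theorem setIntegral_le_apply [IsFiniteMeasureOnCompacts μ]
    (hμ : ∀ a (φ : C_c(X, ℝ)), (∀ x, φ x ≤ ev a x) → ∫ x, φ x ∂μ ≤ L a) {a : A} (ha : 0 ≤ ev a)
    {K : Set X} (hK : IsCompact K) : ∫ x in K, ev a x ∂μ ≤ L a := by
  obtain ⟨ψ, hψ0, hψa, hψK⟩ := exists_compactlySupported_le_and_eqOn ha hK
  calc ∫ x in K, ev a x ∂μ = ∫ x in K, ψ x ∂μ :=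
        (setIntegral_congr_fun hK.measurableSet hψK).symm
    _ ≤ ∫ x, ψ x ∂μ := setIntegral_le_integral
        (ψ.continuous.integrable_of_hasCompactSupport ψ.hasCompactSupport) (.of_forall hψ0)
    _ ≤ L a := hμ a ψ hψa

theorem sub_le_integral [IsFiniteMeasureOnCompacts μ]
    (hμ : ∀ a (φ : C_c(X, ℝ)), (∀ x, φ x ≤ ev a x) → ∫ x, φ x ∂μ ≤ L a) {a θ : A}
    (ha : 0 ≤ ev a) (hint : Integrable (ev a) μ) (hθ0 : 0 ≤ ev θ) {r : ℝ} (hr : 0 < r)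
    (hθ : IsCompact {x | ev θ x ≤ r}) : L a - L (a * θ) / r ≤ ∫ x, ev a x ∂μ := by
  obtain ⟨ψ, hψ0, hψa, hψK⟩ := exists_compactlySupported_le_and_eqOn ha hθ
  have hψ (x : X) : -ψ x ≤ ev (r⁻¹ • (a * θ) - a) x := by
    have hax : 0 ≤ ev a x := ha x
    have hθx : 0 ≤ ev θ x := hθ0 x
    simp only [map_sub, map_smul, map_mul, ContinuousMap.sub_apply, ContinuousMap.smul_apply,
      ContinuousMap.mul_apply, smul_eq_mul]
    obtain hx | hx := le_or_gt (ev θ x) r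
    · have : 0 ≤ r⁻¹ * (ev a x * ev θ x) := by positivity
      linarith [hψK hx]
    · have : 1 ≤ r⁻¹ * ev θ x := by rw [← div_eq_inv_mul, one_le_div hr]; exact hx.le
      nlinarith [hψ0 x]
  have hle := hμ (r⁻¹ • (a * θ) - a) (-ψ) hψ
  have hmono : ∫ x, ψ x ∂μ ≤ ∫ x, ev a x ∂μ := integral_mono
    (ψ.continuous.integrable_of_hasCompactSupport ψ.hasCompactSupport) hint hψa
  simp only [CompactlySupportedContinuousMap.neg_apply, integral_neg, map_sub, map_smul,
    smul_eq_mul, ← div_eq_inv_mul] at hle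
  linarith

theorem integrable_and_apply_eq_integral_of_nonneg [IsFiniteMeasureOnCompacts μ]
    (hμ : ∀ a (φ : C_c(X, ℝ)), (∀ x, φ x ≤ ev a x) → ∫ x, φ x ∂μ ≤ L a) {θ : A}
    (hθ0 : 0 ≤ ev θ) (hθ : ∀ r, IsCompact {x | ev θ x ≤ r}) {a : A} (ha : 0 ≤ ev a) :
    Integrable (ev a) μ ∧ L a = ∫ x, ev a x ∂μ := by
  have hcover : AECover μ atTop fun r : ℝ => {x | ev θ x ≤ r} :=
    ⟨.of_forall fun x => eventually_ge_atTop (ev θ x), fun r => (hθ r).measurableSet⟩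
  have hint : Integrable (ev a) μ := hcover.integrable_of_integral_bounded_of_nonneg_ae (L a)
    (fun r => (ev a).continuous.continuousOn.integrableOn_compact (hθ r)) (.of_forall ha)
    (.of_forall fun r => setIntegral_le_apply hμ ha (hθ r))
  refine ⟨hint, le_antisymm ?_ ?_⟩
  · have hlim : Tendsto (fun r => L a - L (a * θ) / r) atTop (𝓝 (L a)) := by
      simpa using (tendsto_id.const_div_atTop (L (a * θ))).const_sub (L a)
    exact le_of_tendsto hlim <| (eventually_gt_atTop 0).mono fun r hr =>
      sub_le_integral hμ ha hint hθ0 hr (hθ r)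
  · exact le_of_tendsto (hcover.integral_tendsto_of_countably_generated hint)
      (.of_forall fun r => setIntegral_le_apply hμ ha (hθ r))

theorem exists_measure_integral_le (hL : ∀ a, 0 ≤ ev a → 0 ≤ L a) :
    ∃ μ : Measure X, IsFiniteMeasureOnCompacts μ ∧
      ∀ a (φ : C_c(X, ℝ)), (∀ x, φ x ≤ ev a x) → ∫ x, φ x ∂μ ≤ L a := by
  obtain ⟨Λ, hΛ⟩ := exists_positiveLinearMap_apply_le hL
  refine ⟨RealRMK.rieszMeasure Λ, inferInstance, fun a φ hφ => ?_⟩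
  rw [RealRMK.integral_rieszMeasure]
  exact hΛ a φ hφ

theorem exists_measure_forall_apply_eq_integral (hL : ∀ a, 0 ≤ ev a → 0 ≤ L a) {θ : A}
    (hθ0 : 0 ≤ ev θ) (hθ : ∀ r, IsCompact {x | ev θ x ≤ r}) :
    ∃ μ : Measure X, ∀ a, Integrable (ev a) μ ∧ L a = ∫ x, ev a x ∂μ := by
  obtain ⟨μ, _, hμ⟩ := exists_measure_integral_le hL
  refine ⟨μ, fun a => ?_⟩
  obtain ⟨hint₁, hL₁⟩ := integrable_and_apply_eq_integral_of_nonneg hμ hθ0 hθ (a := 1 + a ^ 2)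
    fun x => by simpa using by positivity
  obtain ⟨hint₂, hL₂⟩ := integrable_and_apply_eq_integral_of_nonneg hμ hθ0 hθ
    (a := 1 + a ^ 2 - a) fun x => by simpa using by nlinarith [sq_nonneg (ev a x - 1)]
  have heq : a = 1 + a ^ 2 - (1 + a ^ 2 - a) := by ring
  have hev : ⇑(ev a) = ev (1 + a ^ 2) - ev (1 + a ^ 2 - a) := by
    rw [← ContinuousMap.coe_sub, ← map_sub, ← heq]
  rw [hev, integral_sub' hint₁ hint₂, ← hL₁, ← hL₂, ← map_sub, ← heq]
  exact ⟨hint₁.sub hint₂, rfl⟩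

end RepresentingMeasure

/-! ### Localizations of polynomial rings -/

section RegularLocus

variable {d : ℕ} {𝔻 : Submonoid (MvPolynomial (Fin d) ℝ)}

theorem finiteType_localization_of_fg (h𝔻 : 𝔻.FG) : Algebra.FiniteType ℝ (Localization 𝔻) := by
  have : Monoid.FG 𝔻 := (Monoid.fg_iff_submonoid_fg 𝔻).2 h𝔻
  exact .trans (inferInstanceAs (Algebra.FiniteType ℝ (MvPolynomial (Fin d) ℝ)))
    (IsLocalization.finiteType_of_monoid_fg 𝔻 _)

theorem evalLoc_algebraMap {t : Fin d → ℝ} (ht : ∀ q ∈ 𝔻, MvPolynomial.eval t q ≠ 0)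
    (p : MvPolynomial (Fin d) ℝ) :
    evalLoc 𝔻 t ht (algebraMap _ _ p) = MvPolynomial.eval t p :=
  IsLocalization.lift_eq _ p

theorem evalLoc_mk {t : Fin d → ℝ} (ht : ∀ q ∈ 𝔻, MvPolynomial.eval t q ≠ 0)
    (p : MvPolynomial (Fin d) ℝ) (q : 𝔻) :
    evalLoc 𝔻 t ht (.mk p q) =
      MvPolynomial.eval t p / MvPolynomial.eval t (q : MvPolynomial (Fin d) ℝ) := by
  rw [eq_div_iff (ht q q.2), ← evalLoc_algebraMap ht, ← evalLoc_algebraMap ht, ← map_mul,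
    Localization.mk_eq_mk', IsLocalization.mk'_spec]

theorem exists_forall_eq_evalLoc (χ : Localization 𝔻 →ₐ[ℝ] ℝ) :
    ∃ t, ∃ ht : ∀ q ∈ 𝔻, MvPolynomial.eval t q ≠ 0, ∀ a, χ a = evalLoc 𝔻 t ht a := by
  let t (i : Fin d) : ℝ := χ (algebraMap (MvPolynomial (Fin d) ℝ) _ (.X i))
  have heval (p : MvPolynomial (Fin d) ℝ) :
      χ (algebraMap _ (Localization 𝔻) p) = MvPolynomial.eval t p := by
    have : χ.comp (IsScalarTower.toAlgHom ℝ (MvPolynomial (Fin d) ℝ) _) =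
        MvPolynomial.aeval t := by
      ext i
      simp [t]
    exact DFunLike.congr_fun this p
  have ht (q) (hq : q ∈ 𝔻) : MvPolynomial.eval t q ≠ 0 :=
    heval q ▸ ((IsLocalization.map_units (Localization 𝔻) ⟨q, hq⟩).map χ).ne_zero
  refine ⟨t, ht, DFunLike.congr_fun (f := χ.toRingHom) <| IsLocalization.ringHom_ext 𝔻 <|
    RingHom.ext fun p => (heval p).trans (evalLoc_algebraMap ht p).symm⟩

/-- The points at which no denominator vanishes. -/
def regularLocus (𝔻 : Submonoid (MvPolynomial (Fin d) ℝ)) : Set (Fin d → ℝ) :=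
  {t | ∀ q ∈ 𝔻, MvPolynomial.eval t q ≠ 0}

theorem isOpen_regularLocus (h𝔻 : 𝔻.FG) : IsOpen (regularLocus 𝔻) := by
  obtain ⟨g, hg, hreg⟩ := exists_mem_forall_map_ne_zero_of_fg h𝔻
  have : regularLocus 𝔻 = {t | MvPolynomial.eval t g ≠ 0} :=
    Set.Subset.antisymm (fun t ht => ht g hg) fun t ht => hreg (MvPolynomial.eval t) ht
  exact this ▸ isOpen_ne_fun (MvPolynomial.continuous_eval g) continuous_const

theorem continuous_evalLoc (a : Localization 𝔻) :
    Continuous fun t : regularLocus 𝔻 => evalLoc 𝔻 t t.2 a := by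
  induction a using Localization.ind with
  | H y =>
    refine .congr ?_ fun t : regularLocus 𝔻 => (evalLoc_mk t.2 y.1 y.2).symm
    exact ((MvPolynomial.continuous_eval _).comp continuous_subtype_val).div
      ((MvPolynomial.continuous_eval _).comp continuous_subtype_val) fun t => t.2 _ y.2.2

/-- The elements of `𝔻⁻¹ℝ[x₁,…,x_d]` as continuous functions on the regular locus. -/
noncomputable def evalRegularLocus (𝔻 : Submonoid (MvPolynomial (Fin d) ℝ)) :
    Localization 𝔻 →ₐ[ℝ] C(regularLocus 𝔻, ℝ) where
  toFun a := ⟨_, continuous_evalLoc a⟩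
  map_zero' := by ext; simp
  map_one' := by ext; simp
  map_add' _ _ := by ext; simp
  map_mul' _ _ := by ext; simp
  commutes' r := ContinuousMap.ext fun t =>
    (evalLoc_algebraMap t.2 (.C r)).trans (MvPolynomial.eval_C r)

theorem evalRegularLocus_algebraMap (p : MvPolynomial (Fin d) ℝ) (t : regularLocus 𝔻) :
    evalRegularLocus 𝔻 (algebraMap _ _ p) t = MvPolynomial.eval (t : Fin d → ℝ) p :=
  evalLoc_algebraMap t.2 p

theorem evalRegularLocus_mk (p : MvPolynomial (Fin d) ℝ) (q : 𝔻) (t : regularLocus 𝔻) :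
    evalRegularLocus 𝔻 (.mk p q) t = MvPolynomial.eval (t : Fin d → ℝ) p /
      MvPolynomial.eval (t : Fin d → ℝ) (q : MvPolynomial (Fin d) ℝ) :=
  evalLoc_mk t.2 p q

theorem isClosedEmbedding_coe_prod_inv {g : MvPolynomial (Fin d) ℝ} (hg : g ∈ 𝔻)
    (hreg : ∀ t, MvPolynomial.eval t g ≠ 0 → t ∈ regularLocus 𝔻) :
    IsClosedEmbedding fun t : regularLocus 𝔻 =>
      ((t : Fin d → ℝ), (MvPolynomial.eval (t : Fin d → ℝ) g)⁻¹) := by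
  have hcont : Continuous fun t : Fin d → ℝ => MvPolynomial.eval t g :=
    MvPolynomial.continuous_eval g
  refine ⟨.of_comp (by fun_prop (disch := exact fun t => t.2 g hg)) continuous_fst .subtypeVal, ?_⟩
  have hrange : (Set.range fun t : regularLocus 𝔻 =>
      ((t : Fin d → ℝ), (MvPolynomial.eval (t : Fin d → ℝ) g)⁻¹)) =
      {z | MvPolynomial.eval z.1 g * z.2 = 1} := by
    ext ⟨t, y⟩
    constructor
    · rintro ⟨s, hs⟩
      cases hs
      exact mul_inv_cancel₀ (s.2 g hg)
    · intro (hz : _ * y = 1)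
      exact ⟨⟨t, hreg t (left_ne_zero_of_mul_eq_one hz)⟩, by simp [inv_eq_of_mul_eq_one_right hz]⟩
  rw [hrange]
  exact isClosed_eq (by fun_prop) continuous_const

theorem isCompact_setOf_sum_sq_add_sq_le (ι : Type*) [Fintype ι] (r : ℝ) :
    IsCompact {z : (ι → ℝ) × ℝ | ∑ i, z.1 i ^ 2 + z.2 ^ 2 ≤ r} := by
  refine (isCompact_closedBall (0 : (ι → ℝ) × ℝ) √r).of_isClosed_subset
    (isClosed_le (by fun_prop) continuous_const) fun z (hz : _ ≤ r) => ?_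
  have hsum : 0 ≤ ∑ i, z.1 i ^ 2 := Finset.sum_nonneg fun i _ => sq_nonneg _
  rw [mem_closedBall_zero_iff, Prod.norm_def, sup_le_iff, pi_norm_le_iff_of_nonneg (by positivity)]
  refine ⟨fun i => Real.abs_le_sqrt ?_, Real.abs_le_sqrt (by linarith)⟩
  have := Finset.single_le_sum (fun i _ => sq_nonneg (z.1 i)) (Finset.mem_univ i)
  linarith [sq_nonneg z.2]

theorem exists_forall_isCompact_evalRegularLocus_le (h𝔻 : 𝔻.FG) :
    ∃ θ, 0 ≤ evalRegularLocus 𝔻 θ ∧ ∀ r, IsCompact {t | evalRegularLocus 𝔻 θ t ≤ r} := by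
  obtain ⟨g, hg, hreg⟩ := exists_mem_forall_map_ne_zero_of_fg h𝔻
  let θ : Localization 𝔻 :=
    ∑ i, algebraMap (MvPolynomial (Fin d) ℝ) _ (.X i) ^ 2 + .mk 1 ⟨g, hg⟩ ^ 2
  have hθ (t : regularLocus 𝔻) : evalRegularLocus 𝔻 θ t =
      ∑ i, (t : Fin d → ℝ) i ^ 2 + (MvPolynomial.eval (t : Fin d → ℝ) g)⁻¹ ^ 2 := by
    simp [θ, evalRegularLocus_algebraMap, evalRegularLocus_mk]
  refine ⟨θ, fun t => ?_, fun r => ?_⟩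
  · change 0 ≤ evalRegularLocus 𝔻 θ t
    rw [hθ]
    positivity
  · simp only [hθ]
    exact (isClosedEmbedding_coe_prod_inv hg fun t => hreg (MvPolynomial.eval t)).isCompact_preimage
      (isCompact_setOf_sum_sq_add_sq_le (Fin d) r)

theorem exists_measure_forall_apply_eq_integral_of_fg (h𝔻 : 𝔻.FG) {L : Localization 𝔻 →ₗ[ℝ] ℝ}
    (hL : ∀ a, 0 ≤ evalRegularLocus 𝔻 a → 0 ≤ L a) :
    ∃ μ : Measure (Fin d → ℝ), (∀ q ∈ 𝔻, μ {x | MvPolynomial.eval x q = 0} = 0) ∧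
      ∀ p q (hq : q ∈ 𝔻), Integrable (fun x => MvPolynomial.eval x p / MvPolynomial.eval x q) μ ∧
        L (.mk p ⟨q, hq⟩) = ∫ x, MvPolynomial.eval x p / MvPolynomial.eval x q ∂μ := by
  have := (isOpen_regularLocus h𝔻).locallyCompactSpace
  obtain ⟨θ, hθ0, hθ⟩ := exists_forall_isCompact_evalRegularLocus_le h𝔻
  obtain ⟨μ, hμ⟩ := exists_measure_forall_apply_eq_integral hL hθ0 hθ
  have hemb : MeasurableEmbedding ((↑) : regularLocus 𝔻 → Fin d → ℝ) :=
    .subtype_coe (isOpen_regularLocus h𝔻).measurableSet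
  refine ⟨μ.map (↑), fun q hq => ?_, fun p q hq => ?_⟩
  · have hempty : (↑) ⁻¹' {x | MvPolynomial.eval x q = 0} = (∅ : Set (regularLocus 𝔻)) :=
      Set.eq_empty_of_forall_notMem fun t => t.2 q hq
    rw [hemb.map_apply, hempty, measure_empty]
  · have hmk : ⇑(evalRegularLocus 𝔻 (.mk p ⟨q, hq⟩)) =
        (fun x => MvPolynomial.eval x p / MvPolynomial.eval x q) ∘ (↑) :=
      funext (evalRegularLocus_mk p ⟨q, hq⟩)
    rw [hemb.integrable_map_iff, hemb.integral_map, ← hmk]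
    simpa [hmk] using hμ (.mk p ⟨q, hq⟩)

end RegularLocus

/-- **Theorem 3.1 (rational moment problem, finitely generated case).**
Let `𝔻` be a finitely generated multiplicative set in `ℝ[x₁,…,x_d]` (with
`1 ∈ 𝔻`, `0 ∉ 𝔻`), `A = 𝔻⁻¹ℝ[x₁,…,x_d]`, and let `T` be the preordering of `A`
generated by (the images of) `f₁,…,f_k`.  Assume
(i) the elements `h₁,…,h_m ∈ A` are uniformly bounded on
`K(T) = {t : q(t) ≠ 0 ∀ q ∈ 𝔻, f_i(t) ≥ 0}`, and
(ii) for each `λ ∈ h(K(T))` there are a finitely generated multiplicative set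
`ℰ_λ ⊆ ℝ[y]`, a finite-dimensional commutative real unital algebra `C_λ` and a
surjective algebra homomorphism `ℰ_λ⁻¹ℝ[y] ⊗ C_λ → A/I_λ`.
Then every `T`-positive linear functional on `A` is given by a positive Borel
measure `μ` on `ℝ^d` vanishing on the zero set of each `q ∈ 𝔻`. -/
theorem rational_moment_problem_fg {d : ℕ}
    (𝔻 : Submonoid (MvPolynomial (Fin d) ℝ)) (h𝔻0 : (0 : MvPolynomial (Fin d) ℝ) ∉ 𝔻)
    (h𝔻fg : 𝔻.FG) {k m : ℕ} (f : Fin k → MvPolynomial (Fin d) ℝ)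
    (h : Fin m → Localization 𝔻)
    (hbd : ∃ C : ℝ, ∀ t : Fin d → ℝ, ∀ ht : ∀ q ∈ 𝔻, MvPolynomial.eval t q ≠ 0,
      (∀ i : Fin k, 0 ≤ MvPolynomial.eval t (f i)) →
      ∀ j : Fin m, |evalLoc 𝔻 t ht (h j)| ≤ C)
    (hfib : ∀ lam : Fin m → ℝ,
      (∃ t : Fin d → ℝ, ∃ ht : ∀ q ∈ 𝔻, MvPolynomial.eval t q ≠ 0,
        (∀ i : Fin k, 0 ≤ MvPolynomial.eval t (f i)) ∧
        ∀ j : Fin m, evalLoc 𝔻 t ht (h j) = lam j) →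
      ∃ (ℰ : Submonoid (Polynomial ℝ)), (0 : Polynomial ℝ) ∉ ℰ ∧ ℰ.FG ∧
        ∃ (Cb : FinCommAlg)
          (ρ : TensorProduct ℝ (Localization ℰ) Cb.carrier →ₐ[ℝ]
            (Localization 𝔻 ⧸ Ideal.span (Set.range fun j : Fin m =>
              h j - algebraMap ℝ (Localization 𝔻) (lam j)))),
          Function.Surjective ρ)
    (L : Localization 𝔻 →ₗ[ℝ] ℝ)
    (hL : ∀ a : Localization 𝔻,
      IsInPreordering
        (Set.range fun i : Fin k =>
          algebraMap (MvPolynomial (Fin d) ℝ) (Localization 𝔻) (f i)) a → 0 ≤ L a) :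
    ∃ μ : MeasureTheory.Measure (Fin d → ℝ),
      (∀ q ∈ 𝔻, μ {x : Fin d → ℝ | MvPolynomial.eval x q = 0} = 0) ∧
      ∀ (p : MvPolynomial (Fin d) ℝ) (q : MvPolynomial (Fin d) ℝ) (hq : q ∈ 𝔻),
        MeasureTheory.Integrable
          (fun x : Fin d → ℝ => MvPolynomial.eval x p / MvPolynomial.eval x q) μ ∧
        L (Localization.mk p ⟨q, hq⟩) =
          ∫ x : Fin d → ℝ, MvPolynomial.eval x p / MvPolynomial.eval x q ∂μ := by
  have := finiteType_localization_of_fg h𝔻fg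
  obtain ⟨C, hC⟩ := hbd
  refine exists_measure_forall_apply_eq_integral_of_fg h𝔻fg fun a ha => ?_
  have hchar (χ : Localization 𝔻 →ₐ[ℝ] ℝ)
      (hχ : ∀ s ∈ Set.range fun i => algebraMap _ (Localization 𝔻) (f i), 0 ≤ χ s) :
      ∃ t, ∃ ht : ∀ q ∈ 𝔻, MvPolynomial.eval t q ≠ 0,
        (∀ i, 0 ≤ MvPolynomial.eval t (f i)) ∧ ∀ j, evalLoc 𝔻 t ht (h j) = χ (h j) := by
    obtain ⟨t, ht, hχt⟩ := exists_forall_eq_evalLoc χ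
    refine ⟨t, ht, fun i => ?_, fun j => (hχt _).symm⟩
    simpa only [hχt, evalLoc_algebraMap] using hχ _ ⟨i, rfl⟩
  refine IsPositiveOn.apply_nonneg_of_forall_algHom (S := Set.range _) (Set.finite_range _)
    (h := h) (C := C) (fun χ hχ j => ?_) (fun χ hχ => hfib _ (hchar χ hχ)) hL fun χ => ?_
  · obtain ⟨t, ht, hf, hh⟩ := hchar χ hχ
    exact hh j ▸ hC t ht hf j
  · obtain ⟨t, ht, hχt⟩ := exists_forall_eq_evalLoc χ
    exact hχt a ▸ ha ⟨t, ht⟩
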